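/- Let Δ ⊂ ℝ³ be a tetrahedron with |Δ| = 1. There is a constant C depending only on Δ such that for every ρ ∈ [0,1] and every ℓ > 0, e(ρ) − μ* ρ ≥ F_{ℓΔ}(ρ)/ℓ³ − C ρ/ℓ. -/

import Mathlib

open MeasureTheory Metric Set Filter Bornology
open scoped Topology ENNReal NNReal Pointwise

noncomputable section

/-- Three-dimensional Euclidean space. -/
abbrev E3 : Type := EuclideanSpace ℝ (Fin 3)

/-- The divergence of a vector field on `E3`, defined as the trace of its derivative. -/
def divg (φ : E3 → E3) (x : E3) : ℝ :=
  LinearMap.trace ℝ E3 (fderiv ℝ φ x : E3 →ₗ[ℝ] E3)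

/-- The candidate values `∫_Ω div φ` over `C¹` compactly supported vector fields bounded by one. -/
def perCand (Ω : Set E3) : Set ℝ :=
  {a : ℝ | ∃ φ : E3 → E3, ContDiff ℝ 1 φ ∧ HasCompactSupport φ ∧
      (∀ x, ‖φ x‖ ≤ 1) ∧ a = ∫ x in Ω, divg φ x}

/-- The perimeter of a set, in the sense of geometric measure theory. -/
def per (Ω : Set E3) : ℝ := sSup (perCand Ω)

/-- A set has finite perimeter if the family of integrals defining the perimeter is
bounded above. -/
def HasFinPer (Ω : Set E3) : Prop := BddAbove (perCand Ω)

/-- The Lebesgue volume of a set as a real number. -/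
def vol (Ω : Set E3) : ℝ := (volume Ω).toReal

/-- The liquid drop energy `𝓔_Λ[ρ,Ω]`. -/
def ldEnergy (Λ : Set E3) (ρ : ℝ) (Ω : Set E3) : ℝ :=
  per Ω + (1/2) * ∫ x, ∫ y,
    (Set.indicator Ω (fun _ => (1:ℝ)) x - ρ * Set.indicator Λ (fun _ => (1:ℝ)) x) *
      (Set.indicator Ω (fun _ => (1:ℝ)) y - ρ * Set.indicator Λ (fun _ => (1:ℝ)) y) / ‖x - y‖

/-- The neutral ground state energy `E_Λ(ρ)`. -/
def EE (Λ : Set E3) (ρ : ℝ) : ℝ :=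
  sInf {t : ℝ | ∃ Ω : Set E3, MeasurableSet Ω ∧ Ω ⊆ Λ ∧ HasFinPer Ω ∧
    vol Ω = ρ * vol Λ ∧ t = ldEnergy Λ ρ Ω}

/-- The liquid drop energy `I[Ω]` of an isolated droplet (no background). -/
def II (Ω : Set E3) : ℝ :=
  per Ω + (1/2) * ∫ x in Ω, ∫ y in Ω, 1 / ‖x - y‖

/-- `μ* = inf I[Ω]/|Ω|`. -/
def muStar : ℝ :=
  sInf {t : ℝ | ∃ Ω : Set E3, MeasurableSet Ω ∧ HasFinPer Ω ∧
    0 < volume Ω ∧ volume Ω < ⊤ ∧ t = II Ω / vol Ω}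

/-- A minimizer for the isolated liquid drop problem. -/
def IsMinimizer (Ω : Set E3) : Prop :=
  MeasurableSet Ω ∧ HasFinPer Ω ∧ 0 < volume Ω ∧ volume Ω < ⊤ ∧ II Ω = muStar * vol Ω

/-- The set of masses of minimizers. -/
def minimizerMasses : Set ℝ := {m : ℝ | ∃ Ω : Set E3, IsMinimizer Ω ∧ m = vol Ω}

/-- The largest mass of a minimizer. -/
def mStar : ℝ := sSup minimizerMasses

/-- The smallest mass of a minimizer. -/
def mStarStar : ℝ := sInf minimizerMasses

/-- `Λ` is an `(r,L)`-Lipschitz open set: near each boundary point it is, in a suitable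
orthonormal coordinate system, the epigraph of an `L`-Lipschitz function. -/
def IsLipschitzDomain (r L : ℝ) (Λ : Set E3) : Prop :=
  ∀ x ∈ frontier Λ, ∃ (g : E3 ≃ᵢ E3) (f : ℝ × ℝ → ℝ),
    LipschitzWith L.toNNReal f ∧
    Λ ∩ ball x r = {y ∈ ball x r | f (g y 0, g y 1) < g y 2}

/-- Fisher regularity of the boundary. -/
def FisherCond (C ℓ : ℝ) (Λ : Set E3) : Prop :=
  ∀ h : ℝ, 0 < h → h ≤ ℓ → (volume (frontier Λ + ball (0:E3) h)).toReal ≤ C * ℓ^2 * h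

/-- An admissible sequence of domains for the thermodynamic limit. -/
def IsAdmissibleSeq (r L C : ℝ) (Λs : ℕ → Set E3) (ℓ : ℕ → ℝ) : Prop :=
  Tendsto ℓ atTop atTop ∧
  ∀ n : ℕ, IsOpen (Λs n) ∧ IsBounded (Λs n) ∧ IsLipschitzDomain r L (Λs n) ∧
    ball 0 (ℓ n / C) ⊆ Λs n ∧ Λs n ⊆ ball 0 (ℓ n) ∧ FisherCond C (ℓ n) (Λs n)

/-- `e` is the thermodynamic limit function of the liquid drop model. -/
def IsThermoLimit (e : ℝ → ℝ) : Prop :=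
  ∀ ρ : ℝ, 0 ≤ ρ → ρ ≤ 1 →
    ∀ (r L C : ℝ) (Λs : ℕ → Set E3) (ℓ : ℕ → ℝ), 0 < r → 0 < L → 0 < C →
      IsAdmissibleSeq r L C Λs ℓ →
      Tendsto (fun n => EE (Λs n) ρ / vol (Λs n)) atTop (𝓝 (e ρ))

/-- The domain for the `N`-particle Jellium problem: `N^{1/3} Λ₁` with `Λ₁` the ball of
unit volume centered at the origin. -/
def jelDomain (N : ℕ) : Set E3 :=
  ball (0:E3) ((N : ℝ) ^ ((1:ℝ)/3) * (3 / (4 * Real.pi)) ^ ((1:ℝ)/3))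

/-- The `N`-particle Jellium ground state energy. -/
def jelN (N : ℕ) : ℝ :=
  sInf {t : ℝ | ∃ x : Fin N → E3, (∀ j, x j ∈ jelDomain N) ∧
    t = (∑ j : Fin N, ∑ k : Fin N, if j < k then 1 / ‖x j - x k‖ else 0)
      - (∑ j : Fin N, ∫ y in jelDomain N, 1 / ‖x j - y‖)
      + (1/2) * ∫ x' in jelDomain N, ∫ y in jelDomain N, 1 / ‖x' - y‖}

/-- `eJ` is the Jellium energy per particle in the thermodynamic limit. -/
def IsJelliumLimit (eJ : ℝ) : Prop :=
  Tendsto (fun N : ℕ => jelN N / (N : ℝ)) atTop (𝓝 eJ)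

/-- The grand-canonical liquid drop energy `F_Λ(ρ)`. -/
def FF (Λ : Set E3) (ρ : ℝ) : ℝ :=
  sInf {t : ℝ | ∃ Ω : Set E3, MeasurableSet Ω ∧ Ω ⊆ Λ ∧ HasFinPer Ω ∧
    t = ldEnergy Λ ρ Ω - muStar * vol Ω}

/-- A tetrahedron: the interior of the convex hull of four affinely independent points. -/
def IsTetra (Δ : Set E3) : Prop :=
  ∃ v : Fin 4 → E3, AffineIndependent ℝ v ∧ Δ = interior (convexHull ℝ (Set.range v))

/-- The open cube `(-L/2, L/2)³`. -/
def cubeL (Lside : ℝ) : Set E3 := {x : E3 | ∀ i, |x i| < Lside / 2}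

/-- The grand-canonical Jellium energy of point particles of charge `m` in the domain `S`
with a uniform background of density one. -/
def pointJellium (m : ℝ) (S : Set E3) : ℝ :=
  sInf {t : ℝ | ∃ (n : ℕ) (x : Fin n → E3), (∀ j, x j ∈ S) ∧
    t = (∑ j : Fin n, ∑ k : Fin n, if j < k then m^2 / ‖x j - x k‖ else 0)
      - m * (∑ j : Fin n, ∫ y in S, 1 / ‖x j - y‖)
      + (1/2) * ∫ x' in S, ∫ y in S, 1 / ‖x' - y‖}

/-- The conclusions of the decomposition theorem for minimizing sequences. -/
def IsDecomp (Ω : ℕ → Set E3) (m : ℝ) (K : ℕ) (Ωs : Fin K → Set E3)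
    (a : ℕ → Fin K → E3) (R : ℝ) (φ : ℕ → ℕ) : Prop :=
  StrictMono φ ∧ 0 < R ∧
  (∀ j k : Fin K, j ≠ k → Tendsto (fun n => ‖a n j - a n k‖) atTop atTop) ∧
  (∀ j, IsMinimizer (Ωs j)) ∧
  (∀ j, mStarStar ≤ vol (Ωs j) ∧ vol (Ωs j) ≤ mStar) ∧
  (∀ j, Tendsto
    (fun n => volume (symmDiff ({x : E3 | x + a n j ∈ Ω (φ n)} ∩ ball (0:E3) R) (Ωs j)))
    atTop (𝓝 0)) ∧
  Tendsto (fun n => volume (Ω (φ n) \ ⋃ j, ball (a n j) R)) atTop (𝓝 0) ∧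
  Tendsto (fun n => per (Ω (φ n) \ ⋃ j, ball (a n j) R)) atTop (𝓝 0) ∧
  m = ∑ j, vol (Ωs j) ∧
  (2 ≤ K → ∃ ε : ℕ → ℝ, Tendsto ε atTop (𝓝 0) ∧ ∀ n : ℕ,
    muStar * vol (Ω (φ n)) +
      (∑ j : Fin K, ∑ k : Fin K,
        if j < k then (vol (Ωs j) * vol (Ωs k) + ε n) / ‖a n j - a n k‖ else 0)
      ≤ II (Ω (φ n)))

instance : MeasurableSpace (Matrix (Fin 3) (Fin 3) ℝ) :=
  (inferInstance : MeasurableSpace (Fin 3 → Fin 3 → ℝ))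

/-- The rotation group SO(3), as a set of matrices. -/
def SO3 : Set (Matrix (Fin 3) (Fin 3) ℝ) := {R | R * R.transpose = 1 ∧ R.det = 1}

/-- The action of a matrix on Euclidean space. -/
def rot (R : Matrix (Fin 3) (Fin 3) ℝ) (x : E3) : E3 :=
  (EuclideanSpace.equiv (Fin 3) ℝ).symm (R.mulVec (EuclideanSpace.equiv (Fin 3) ℝ x))

/-- The image of a set under the rigid motion `x ↦ Rx + τ`. -/
def rigidImage (R : Matrix (Fin 3) (Fin 3) ℝ) (τ : E3) (S : Set E3) : Set E3 :=
  (fun x => rot R x + τ) '' S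

/-- `μ` is the normalized Haar measure of SO(3): a probability measure concentrated on SO(3)
which is invariant under left multiplication by rotations. -/
def IsHaarSO3 (μ : Measure (Matrix (Fin 3) (Fin 3) ℝ)) : Prop :=
  IsProbabilityMeasure μ ∧ μ SO3ᶜ = 0 ∧ ∀ S ∈ SO3, Measure.map (fun R => S * R) μ = μ

/-- The cube of the tiling of side length `ε` indexed by `z ∈ ℤ³`. -/
def cubeZ (ε : ℝ) (z : Fin 3 → ℤ) : Set E3 := {x : E3 | ∀ i, |x i - ε * (z i : ℝ)| < ε / 2}

/-- The distance between two sets. -/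
def setDist (s t : Set E3) : ℝ := sInf {d : ℝ | ∃ p ∈ s, ∃ q ∈ t, d = dist p q}

/-- The outer cubic boundary layer of `Λ` at scale `ε`. -/
def outerLayer (Λ : Set E3) (ε : ℝ) : Set E3 :=
  ⋃ z ∈ {z : Fin 3 → ℤ | setDist (cubeZ ε z) (frontier Λ) ≤ ε}, closure (cubeZ ε z \ Λ)

/-- The Coulomb kernel is locally integrable. -/
lemma gs_kernel_int (R : ℝ) :
    Integrable (fun z : E3 => (ball (0:E3) R).indicator (fun _ => (1:ℝ)) z / ‖z‖) := by
  have h : IntegrableOn (fun z : E3 => 1 / ‖z‖) (ball 0 R) volume := by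
    rw [integrableOn_fun_norm_addHaar (volume : Measure E3) (f := fun r : ℝ => 1 / r) (r := R)]
    have h2 : IntegrableOn (fun y : ℝ => y) (Ioo 0 R) :=
      (continuous_id.integrableOn_Icc (a := (0:ℝ)) (b := R)).mono_set Ioo_subset_Icc_self
    refine h2.congr_fun (fun y hy => ?_) measurableSet_Ioo
    have : y ≠ 0 := hy.1.ne'
    simp [pow_two, this]
  refine (h.integrable_indicator measurableSet_ball).congr (Eventually.of_forall fun z => ?_)
  by_cases hz : z ∈ ball (0:E3) R <;> simp [hz]

/-- Bounded measurable functions supported in a ball. -/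
structure GsNice (R : ℝ) (f : E3 → ℝ) : Prop where
  meas : Measurable f
  bound : ∀ x, |f x| ≤ (ball (0:E3) R).indicator (fun _ => (1:ℝ)) x

lemma GsNice.le_one {R : ℝ} {f : E3 → ℝ} (h : GsNice R f) (x : E3) : |f x| ≤ 1 :=
  (h.bound x).trans (indicator_le_self' (by simp) x |>.trans le_rfl)

lemma GsNice.zero {R : ℝ} {f : E3 → ℝ} (h : GsNice R f) {x : E3} (hx : R ≤ ‖x‖) : f x = 0 := by
  have := h.bound x
  rw [indicator_of_notMem (by simpa using hx)] at this
  exact abs_nonpos_iff.1 this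

lemma GsNice.int_ball (R : ℝ) :
    Integrable ((ball (0:E3) R).indicator (fun _ => (1:ℝ))) :=
  (integrable_indicator_iff measurableSet_ball).2
    (integrableOn_const (measure_ball_lt_top.ne))

lemma GsNice.integrable {R : ℝ} {f : E3 → ℝ} (h : GsNice R f) : Integrable f :=
  (GsNice.int_ball R).mono' h.meas.aestronglyMeasurable
    (Eventually.of_forall fun x => by simpa using h.bound x)

/-- Dominating function on the product. -/
lemma gs_dom_int (R : ℝ) : Integrable (fun z : E3 × E3 =>
    (ball (0:E3) R).indicator (fun _ => (1:ℝ)) z.1 * (ball (0:E3) R).indicator (fun _ => (1:ℝ)) z.2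
      / ‖z.1 - z.2‖) (volume.prod volume) := by
  have h := (GsNice.int_ball R).convolution_integrand (ContinuousLinearMap.mul ℝ ℝ)
    (gs_kernel_int (2*R)) (ν := volume) (μ := volume)
  refine h.mono' ?_ (Eventually.of_forall fun z => ?_)
  · have : Measurable ((ball (0:E3) R).indicator (fun _ => (1:ℝ))) :=
      measurable_const.indicator measurableSet_ball
    exact Measurable.aestronglyMeasurable (by fun_prop)
  · simp only [ContinuousLinearMap.mul_apply']
    by_cases h1 : z.1 ∈ ball (0:E3) R
    · by_cases h2 : z.2 ∈ ball (0:E3) R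
      · have h3 : z.1 - z.2 ∈ ball (0:E3) (2*R) := by
          rw [mem_ball_zero_iff] at *
          have := norm_sub_le z.1 z.2
          linarith
        rw [indicator_of_mem h1, indicator_of_mem h2, indicator_of_mem h3]; simp
      · rw [indicator_of_notMem h2]; simp
    · rw [indicator_of_notMem h1]
      simp only [zero_mul, zero_div, norm_zero]
      exact mul_nonneg (indicator_nonneg (by simp) _)
        (div_nonneg (indicator_nonneg (by simp) _) (norm_nonneg _))

lemma GsNice.prod_le {R : ℝ} {f : E3 → ℝ} (h : GsNice R f) (z : E3 × E3) :
    ‖f z.1 * f z.2 / ‖z.1 - z.2‖‖ ≤ (ball (0:E3) R).indicator (fun _ => (1:ℝ)) z.1 *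
      (ball (0:E3) R).indicator (fun _ => (1:ℝ)) z.2 / ‖z.1 - z.2‖ := by
  rw [norm_div, norm_mul, norm_norm]
  gcongr
  · exact indicator_nonneg (by simp) _
  · exact h.bound _
  · exact h.bound _

lemma GsNice.pairMeas {R : ℝ} {f : E3 → ℝ} (h : GsNice R f) :
    Measurable (fun z : E3 × E3 => f z.1 * f z.2 / ‖z.1 - z.2‖) := by
  have := h.meas
  fun_prop

lemma GsNice.pair {R : ℝ} {f : E3 → ℝ} (h : GsNice R f) :
    Integrable (fun z : E3 × E3 => f z.1 * f z.2 / ‖z.1 - z.2‖) (volume.prod volume) :=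
  (gs_dom_int R).mono' h.pairMeas.aestronglyMeasurable (Eventually.of_forall h.prod_le)

/-- Coulomb double integral over the product space. -/
def gsJ (f : E3 → ℝ) : ℝ := ∫ z : E3 × E3, f z.1 * f z.2 / ‖z.1 - z.2‖ ∂(volume.prod volume)

lemma GsNice.iter {R : ℝ} {f : E3 → ℝ} (h : GsNice R f) :
    ∫ x, ∫ y, f x * f y / ‖x - y‖ = gsJ f := (integral_prod _ h.pair).symm

/-- A bound for the Coulomb energy of functions supported in a ball. -/
def gsJmax (R : ℝ) : ℝ := ∫ z : E3 × E3, (ball (0:E3) R).indicator (fun _ => (1:ℝ)) z.1 *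
      (ball (0:E3) R).indicator (fun _ => (1:ℝ)) z.2 / ‖z.1 - z.2‖ ∂(volume.prod volume)

lemma GsNice.J_le {R : ℝ} {f : E3 → ℝ} (h : GsNice R f) : |gsJ f| ≤ gsJmax R :=
  norm_integral_le_of_norm_le (gs_dom_int R) (Eventually.of_forall h.prod_le)

/-- The charge distribution. -/
def gsf (Λ : Set E3) (ρ : ℝ) (Ω : Set E3) (x : E3) : ℝ :=
  Set.indicator Ω (fun _ => (1:ℝ)) x - ρ * Set.indicator Λ (fun _ => (1:ℝ)) x

lemma gsf_nice {Λ Ω : Set E3} {ρ R : ℝ} (hΛ : MeasurableSet Λ) (hΩ : MeasurableSet Ω)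
    (h1 : Ω ⊆ Λ) (h2 : Λ ⊆ ball 0 R) (h0 : 0 ≤ ρ) (hρ : ρ ≤ 1) : GsNice R (gsf Λ ρ Ω) where
  meas := (measurable_const.indicator hΩ).sub ((measurable_const.indicator hΛ).const_mul ρ)
  bound x := by
    unfold gsf
    by_cases hx : x ∈ Λ
    · rw [indicator_of_mem hx, indicator_of_mem (h2 hx)]
      by_cases hy : x ∈ Ω
      · rw [indicator_of_mem hy, abs_le]; constructor <;> linarith
      · rw [indicator_of_notMem hy, abs_le]; constructor <;> linarith
    · rw [indicator_of_notMem hx, indicator_of_notMem (fun h => hx (h1 h))]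
      simpa using indicator_nonneg (by simp) _

lemma gs_ldEnergy {Λ Ω : Set E3} {ρ R : ℝ} (h : GsNice R (gsf Λ ρ Ω)) :
    ldEnergy Λ ρ Ω = per Ω + 1/2 * gsJ (gsf Λ ρ Ω) := by
  rw [← h.iter]; rfl

/-- Admissible test fields. -/
structure GsAdm (φ : E3 → E3) : Prop where
  smooth : ContDiff ℝ 1 φ
  supp : HasCompactSupport φ
  bound : ∀ x, ‖φ x‖ ≤ 1

/-- The trace as a continuous linear map. -/
def gsTr : (E3 →L[ℝ] E3) →L[ℝ] ℝ :=
  LinearMap.toContinuousLinearMap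
    ((LinearMap.trace ℝ E3).comp (ContinuousLinearMap.coeLM ℝ : (E3 →L[ℝ] E3) →ₗ[ℝ] _))

lemma divg_eq (φ : E3 → E3) (x : E3) : divg φ x = gsTr (fderiv ℝ φ x) := rfl

lemma divg_cont {φ : E3 → E3} (h : ContDiff ℝ 1 φ) : Continuous (divg φ) :=
  gsTr.continuous.comp (h.continuous_fderiv (by norm_num))

lemma divg_supp {φ : E3 → E3} (h : HasCompactSupport φ) : HasCompactSupport (divg φ) :=
  (h.fderiv ℝ).comp_left (g := fun A => gsTr A) (map_zero _)

lemma divg_int {φ : E3 → E3} (h : ContDiff ℝ 1 φ) (h' : HasCompactSupport φ) :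
    Integrable (divg φ) := (divg_cont h).integrable_of_hasCompactSupport (divg_supp h')

lemma gsTr_smulRight (l : E3 →L[ℝ] ℝ) (y : E3) : gsTr (l.smulRight y) = l y := by
  change LinearMap.trace ℝ E3 ((l : E3 →ₗ[ℝ] ℝ).smulRight y) = l y
  simp

lemma divg_smul {V : E3 → ℝ} {φ : E3 → E3} (hV : ContDiff ℝ 1 V) (h : ContDiff ℝ 1 φ) (x : E3) :
    divg (fun x => V x • φ x) x = V x * divg φ x + fderiv ℝ V x (φ x) := by
  rw [divg_eq, fderiv_fun_smul (hV.differentiable (by norm_num) x)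
    (h.differentiable (by norm_num) x), map_add, gsTr_smulRight, map_smul, divg_eq, smul_eq_mul]

lemma divg_sum {ι : Type*} (s : Finset ι) {φ : ι → E3 → E3} (h : ∀ i, ContDiff ℝ 1 (φ i)) (x : E3) :
    divg (fun x => ∑ i ∈ s, φ i x) x = ∑ i ∈ s, divg (φ i) x := by
  rw [divg_eq, fderiv_fun_sum (fun i _ => (h i).differentiable (by norm_num) x), map_sum]
  rfl

lemma divg_const_smul (c : ℝ) {φ : E3 → E3} (h : ContDiff ℝ 1 φ) (x : E3) :
    divg (fun x => c • φ x) x = c * divg φ x := by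
  rw [divg_eq, fderiv_fun_const_smul (h.differentiable (by norm_num) x), map_smul]; rfl

lemma gs_zero_adm : GsAdm (fun _ => 0) :=
  ⟨contDiff_const, HasCompactSupport.zero, by simp⟩

lemma divg_zero (x : E3) : divg (fun _ => 0) x = 0 := by
  rw [divg_eq]; simp

lemma gs_zero_mem (Ω : Set E3) : (0:ℝ) ∈ perCand Ω :=
  ⟨fun _ => 0, contDiff_const, HasCompactSupport.zero, by simp, by simp [divg_zero]⟩

lemma gs_per_nonneg {Ω : Set E3} (h : HasFinPer Ω) : 0 ≤ per Ω := le_csSup h (gs_zero_mem Ω)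

lemma gs_adm_le {Ω : Set E3} (h : HasFinPer Ω) {φ : E3 → E3} (hφ : GsAdm φ) :
    ∫ x in Ω, divg φ x ≤ per Ω := le_csSup h ⟨φ, hφ.smooth, hφ.supp, hφ.bound, rfl⟩

lemma gs_scaled_le {Ω : Set E3} (h : HasFinPer Ω) {ψ : E3 → E3} {c : ℝ} (hc : 0 < c)
    (h1 : ContDiff ℝ 1 ψ) (h2 : HasCompactSupport ψ) (h3 : ∀ x, ‖ψ x‖ ≤ c) :
    ∫ x in Ω, divg ψ x ≤ c * per Ω := by
  have := gs_adm_le h (φ := fun x => c⁻¹ • ψ x)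
    ⟨by fun_prop, h2.smul_left (f := fun _ => c⁻¹), fun x => by
      rw [norm_smul, norm_inv, Real.norm_eq_abs, abs_of_pos hc]
      exact (inv_mul_le_iff₀ hc).2 (by simpa using h3 x)⟩
  simp only [divg_const_smul _ h1] at this
  rw [integral_const_mul] at this
  calc _ = c * (c⁻¹ * ∫ x in Ω, divg ψ x) := by field_simp
    _ ≤ _ := by gcongr

/-- `K` is the limit of smooth cutoffs with gradients bounded in `L¹` by `C`. -/
def GsCut (K : Set E3) (C : ℝ) : Prop :=
  ∃ v : ℕ → E3 → ℝ, (∀ n, ContDiff ℝ 1 (v n)) ∧ (∀ n, HasCompactSupport (v n)) ∧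
    (∀ n x, 0 ≤ v n x) ∧ (∀ n x, v n x ≤ K.indicator (fun _ => (1:ℝ)) x) ∧
    (∀ x, Tendsto (fun n => v n x) atTop (𝓝 (K.indicator (fun _ => (1:ℝ)) x))) ∧
    (∀ n, ∫ x, ‖fderiv ℝ (v n) x‖ ≤ C)

/-- The smoothed indicator of a set. -/
def gsV (A : Set E3) (v : E3 → ℝ) : E3 → ℝ :=
  convolution (A.indicator (fun _ => (1:ℝ))) v (ContinuousLinearMap.mul ℝ ℝ) volume

lemma gsV_apply (A : Set E3) (hA : MeasurableSet A) (v : E3 → ℝ) (x : E3) :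
    gsV A v x = ∫ τ in A, v (x - τ) := by
  unfold gsV convolution
  rw [← integral_indicator hA]
  congr 1; ext t
  by_cases ht : t ∈ A <;> simp [ht]

lemma gs_ind_loc (A : Set E3) (hA : MeasurableSet A) :
    LocallyIntegrable (A.indicator (fun _ => (1:ℝ))) (volume : Measure E3) :=
  (locallyIntegrable_const 1).indicator hA

lemma gsV_smooth {A : Set E3} (hA : MeasurableSet A) {v : E3 → ℝ} (h1 : ContDiff ℝ 1 v)
    (h2 : HasCompactSupport v) : ContDiff ℝ 1 (gsV A v) :=
  h2.contDiff_convolution_right (n := 1) _ (gs_ind_loc A hA) h1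

lemma gsV_fderiv {A : Set E3} (hA : MeasurableSet A) {v : E3 → ℝ} (h1 : ContDiff ℝ 1 v)
    (h2 : HasCompactSupport v) (x : E3) :
    fderiv ℝ (gsV A v) x = ∫ τ in A, fderiv ℝ v (x - τ) := by
  have := (h2.hasFDerivAt_convolution_right (ContinuousLinearMap.mul ℝ ℝ)
    (gs_ind_loc A hA) h1 x).fderiv
  unfold gsV
  rw [this, convolution, ← integral_indicator hA]
  congr 1; ext t y
  by_cases ht : t ∈ A <;> simp [ht, ContinuousLinearMap.precompR]


lemma gs_sum_set_le {ι : Type*} [Fintype ι] {A : ι → Set E3} (hA : ∀ i, MeasurableSet (A i))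
    (hd : Pairwise (Function.onFun Disjoint A)) {g : E3 → ℝ} (hg : Integrable g)
    (h0 : ∀ x, 0 ≤ g x) : ∑ i, ∫ τ in A i, g τ ≤ ∫ τ, g τ := by
  rw [← integral_iUnion_fintype hA hd (fun i => hg.integrableOn)]
  exact setIntegral_le_integral hg (Eventually.of_forall h0)

lemma gs_per_step {Ω : Set E3} (hΩ : MeasurableSet Ω) (hΩv : volume Ω ≠ ⊤) (hf : HasFinPer Ω)
    {c C : ℝ} (hc : 0 < c) {v : E3 → ℝ} (h1 : ContDiff ℝ 1 v) (h2 : HasCompactSupport v)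
    (h3 : ∀ x, 0 ≤ v x) (h4 : ∫ x, v x ≤ c) (h5 : ∫ x, ‖fderiv ℝ v x‖ ≤ C)
    {ι : Type*} [Fintype ι] (φ : ι → E3 → E3) (hφ : ∀ i, GsAdm (φ i)) (A : ι → Set E3)
    (hA : ∀ i, MeasurableSet (A i)) (hd : Pairwise (Function.onFun Disjoint A)) :
    ∑ i, ∫ x in Ω, gsV (A i) v x * divg (φ i) x ≤ c * per Ω + C * vol Ω := by
  have hV : ∀ i, ContDiff ℝ 1 (gsV (A i) v) := fun i => gsV_smooth (hA i) h1 h2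
  have hi : Integrable v := h1.continuous.integrable_of_hasCompactSupport h2
  have hfc : Continuous (fderiv ℝ v) := h1.continuous_fderiv (by norm_num)
  have hi' : Integrable (fderiv ℝ v) :=
    hfc.integrable_of_hasCompactSupport (h2.fderiv ℝ)
  have hS : ∀ i, ContDiff ℝ 1 (fun x => gsV (A i) v x • φ i x) :=
    fun i => (hV i).smul (hφ i).smooth
  have hnn : ∀ i x, 0 ≤ gsV (A i) v x := fun i x => by
    rw [gsV_apply _ (hA i)]; exact integral_nonneg fun _ => h3 _
  have hsum : ∀ x, ∑ i, gsV (A i) v x ≤ c := fun x => by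
    calc ∑ i, gsV (A i) v x = ∑ i, ∫ τ in A i, v (x - τ) :=
          Finset.sum_congr rfl fun i _ => gsV_apply _ (hA i) _ _
      _ ≤ ∫ τ, v (x - τ) := gs_sum_set_le hA hd (hi.comp_sub_left x) fun _ => h3 _
      _ = ∫ τ, v τ := integral_sub_left_eq_self _ _ x
      _ ≤ c := h4
  have hgrad : ∀ x, ∑ i, ‖fderiv ℝ (gsV (A i) v) x‖ ≤ C := fun x => by
    calc ∑ i, ‖fderiv ℝ (gsV (A i) v) x‖ ≤ ∑ i, ∫ τ in A i, ‖fderiv ℝ v (x - τ)‖ :=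
          Finset.sum_le_sum fun i _ => by
            rw [gsV_fderiv (hA i) h1 h2]; exact norm_integral_le_integral_norm _
      _ ≤ ∫ τ, ‖fderiv ℝ v (x - τ)‖ :=
          gs_sum_set_le hA hd (hi'.comp_sub_left x).norm fun _ => norm_nonneg _
      _ = ∫ τ, ‖fderiv ℝ v τ‖ := integral_sub_left_eq_self (fun τ => ‖fderiv ℝ v τ‖) _ x
      _ ≤ C := h5
  have key := gs_scaled_le hf (ψ := fun x => ∑ i, gsV (A i) v x • φ i x) hc
    (ContDiff.sum fun i _ => hS i)
    (by
      have : ∀ s : Finset ι, HasCompactSupport (fun x => ∑ i ∈ s, gsV (A i) v x • φ i x) := by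
        classical
        intro s
        induction s using Finset.induction_on with
        | empty => simp only [Finset.sum_empty]; exact HasCompactSupport.zero
        | insert a s ha ih =>
          simp only [Finset.sum_insert ha]
          exact ((hφ a).supp.smul_left (f := gsV (A a) v)).add ih
      exact this _)
    (fun x => by
      calc _ ≤ ∑ i, ‖gsV (A i) v x • φ i x‖ := norm_sum_le _ _
        _ ≤ ∑ i, gsV (A i) v x := Finset.sum_le_sum fun i _ => by
            rw [norm_smul, Real.norm_eq_abs, abs_of_nonneg (hnn i x)]
            exact mul_le_of_le_one_right (hnn i x) ((hφ i).bound x)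
        _ ≤ c := hsum x)
  have hint1 : ∀ i, Integrable (fun x => gsV (A i) v x * divg (φ i) x) := fun i =>
    ((hV i).continuous.mul (divg_cont (hφ i).smooth)).integrable_of_hasCompactSupport
      ((divg_supp (hφ i).supp).mul_left)
  have hint2 : ∀ i, Integrable (fun x => fderiv ℝ (gsV (A i) v) x (φ i x)) := fun i => by
    refine (((hV i).continuous_fderiv (by norm_num)).clm_apply
      (hφ i).smooth.continuous).integrable_of_hasCompactSupport ?_
    refine (hφ i).supp.mono ?_
    intro x hx h0
    exact hx (by simp [h0])
  have e1 : ∫ x in Ω, divg (fun x => ∑ i, gsV (A i) v x • φ i x) x =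
      (∑ i, ∫ x in Ω, gsV (A i) v x * divg (φ i) x)
        + ∫ x in Ω, ∑ i, fderiv ℝ (gsV (A i) v) x (φ i x) := by
    rw [← integral_finsetSum _ (fun i _ => (hint1 i).integrableOn), ← integral_add
      (integrable_finsetSum _ fun i _ => (hint1 i).integrableOn)
      (integrable_finsetSum _ fun i _ => (hint2 i).integrableOn)]
    congr 1; ext x
    rw [divg_sum _ hS, ← Finset.sum_add_distrib]
    exact Finset.sum_congr rfl fun i _ => divg_smul (hV i) (hφ i).smooth x
  have e2 : ‖∫ x in Ω, ∑ i, fderiv ℝ (gsV (A i) v) x (φ i x)‖ ≤ C * vol Ω := by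
    refine norm_setIntegral_le_of_norm_le_const hΩv.lt_top (fun x _ => ?_)
    calc _ ≤ ∑ i, ‖fderiv ℝ (gsV (A i) v) x (φ i x)‖ := norm_sum_le _ _
      _ ≤ ∑ i, ‖fderiv ℝ (gsV (A i) v) x‖ := Finset.sum_le_sum fun i _ =>
          ((fderiv ℝ (gsV (A i) v) x).le_opNorm _).trans
            (mul_le_of_le_one_right (norm_nonneg _) ((hφ i).bound x))
      _ ≤ C := hgrad x
  have e3 := (abs_le.1 e2).1
  rw [e1] at key
  linarith

lemma gs_per_main {Ω K : Set E3} (hΩ : MeasurableSet Ω) (hΩv : volume Ω ≠ ⊤) (hf : HasFinPer Ω)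
    (hK : MeasurableSet K) (hKv : volume K ≠ ⊤) (hKp : 0 < vol K) {C : ℝ} (hc : GsCut K C)
    {ι : Type*} [Fintype ι] (φ : ι → E3 → E3) (hφ : ∀ i, GsAdm (φ i)) (A : ι → Set E3)
    (hA : ∀ i, MeasurableSet (A i)) (hAv : ∀ i, volume (A i) ≠ ⊤)
    (hd : Pairwise (Function.onFun Disjoint A)) :
    ∑ i, ∫ τ in A i, ∫ x in Ω, K.indicator (fun _ => (1:ℝ)) (x - τ) * divg (φ i) x
      ≤ vol K * per Ω + C * vol Ω := by
  obtain ⟨v, h1, h2, h3, h4, h5, h6⟩ := hc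
  have hKi : Integrable (K.indicator (fun _ => (1:ℝ))) :=
    (integrable_indicator_iff hK).2 (integrableOn_const hKv)
  have hb : ∀ n x, v n x ≤ 1 := fun n x => (h4 n x).trans (indicator_le_self' (by simp) x)
  have step : ∀ n, ∑ i, ∫ x in Ω, gsV (A i) (v n) x * divg (φ i) x
      ≤ vol K * per Ω + C * vol Ω := fun n => by
    refine gs_per_step hΩ hΩv hf hKp (h1 n) (h2 n) (h3 n) ?_ (h6 n) φ hφ A hA hd
    calc ∫ x, v n x ≤ ∫ x, K.indicator (fun _ => (1:ℝ)) x :=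
          integral_mono ((h1 n).continuous.integrable_of_hasCompactSupport (h2 n)) hKi (h4 n)
      _ = vol K := by rw [integral_indicator hK]; simp [vol, Measure.real]
  suffices hT : ∀ i, Tendsto (fun n => ∫ x in Ω, gsV (A i) (v n) x * divg (φ i) x) atTop
      (𝓝 (∫ τ in A i, ∫ x in Ω, K.indicator (fun _ => (1:ℝ)) (x - τ) * divg (φ i) x)) from
    le_of_tendsto' (tendsto_finsetSum _ fun i _ => hT i) step
  intro i
  have : IsFiniteMeasure (volume.restrict (A i)) := ⟨by simpa using (hAv i).lt_top⟩
  have hdi : Integrable (fun z : E3 × E3 => divg (φ i) z.2)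
      ((volume.restrict (A i)).prod (volume.restrict Ω)) :=
    (divg_int (hφ i).smooth (hφ i).supp).integrableOn.integrable.comp_snd _
  have hdm : Measurable (divg (φ i)) := (divg_cont (hφ i).smooth).measurable
  have hKm : Measurable (K.indicator (fun _ => (1:ℝ))) := measurable_const.indicator hK
  have hint : ∀ g : E3 → ℝ, Measurable g → (∀ x, |g x| ≤ 1) →
      Integrable (fun z : E3 × E3 => g (z.2 - z.1) * divg (φ i) z.2)
      ((volume.restrict (A i)).prod (volume.restrict Ω)) := fun g hg hg1 => by
    refine hdi.mono (by fun_prop) (Eventually.of_forall fun z => ?_)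
    rw [norm_mul]
    exact mul_le_of_le_one_left (norm_nonneg _) (hg1 _)
  have hK1 : ∀ x, |K.indicator (fun _ => (1:ℝ)) x| ≤ 1 := fun x => by
    by_cases hx : x ∈ K <;> simp [hx]
  have hv1 : ∀ n x, |v n x| ≤ 1 := fun n x => by rw [abs_of_nonneg (h3 n x)]; exact hb n x
  have e0 := integral_prod _ (hint _ hKm hK1)
  rw [← e0]
  have e1 : ∀ n, ∫ x in Ω, gsV (A i) (v n) x * divg (φ i) x =
      ∫ z, v n (z.2 - z.1) * divg (φ i) z.2 ∂((volume.restrict (A i)).prod (volume.restrict Ω)) := by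
    intro n
    rw [integral_prod_symm _ (hint _ (h1 n).continuous.measurable (hv1 n))]
    congr 1; ext x
    rw [gsV_apply _ (hA i), ← integral_mul_const]
  simp only [e1]
  refine tendsto_integral_of_dominated_convergence (fun z => ‖divg (φ i) z.2‖)
    (fun n => (hint _ (h1 n).continuous.measurable (hv1 n)).aestronglyMeasurable) hdi.norm
    (fun n => Eventually.of_forall fun z => ?_) (Eventually.of_forall fun z => ?_)
  · rw [norm_mul]
    exact mul_le_of_le_one_left (norm_nonneg _) (hv1 n _)
  · exact (h5 _).mul_const _

lemma gsTr_eq (A : E3 →L[ℝ] E3) :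
    gsTr A = ∑ i : Fin 3, (A (EuclideanSpace.single i 1)) i := by
  change LinearMap.trace ℝ E3 (A : E3 →ₗ[ℝ] E3) = _
  rw [LinearMap.trace_eq_sum_inner _ (EuclideanSpace.basisFun (Fin 3) ℝ)]
  simp [EuclideanSpace.inner_single_left]

lemma gs_div_zero {ψ : E3 → E3} (h1 : ContDiff ℝ 1 ψ) (h2 : HasCompactSupport ψ) :
    ∫ x, divg ψ x = 0 := by
  have hd := h1.differentiable (by norm_num)
  have hc : Continuous (fderiv ℝ ψ) := h1.continuous_fderiv (by norm_num)
  have hi : ∀ i : Fin 3, Integrable (fun x => (fderiv ℝ ψ x (EuclideanSpace.single i 1)) i) := by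
    intro i
    refine Continuous.integrable_of_hasCompactSupport (by fun_prop) ?_
    exact (h2.fderiv ℝ).comp_left (g := fun A : E3 →L[ℝ] E3 => (A (EuclideanSpace.single i 1)) i)
      (by simp)
  simp only [divg_eq, gsTr_eq]
  rw [integral_finsetSum _ fun i _ => hi i]
  refine Finset.sum_eq_zero fun i _ => ?_
  have hcoord : ∀ x, HasFDerivAt (fun x => (ψ x) i)
      ((EuclideanSpace.proj i : E3 →L[ℝ] ℝ).comp (fderiv ℝ ψ x)) x := fun x =>
    (EuclideanSpace.proj i : E3 →L[ℝ] ℝ).hasFDerivAt.comp x (hd x).hasFDerivAt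
  have := integral_bilinear_hasLineDerivAt_right_eq_neg_left_of_integrable
    (B := ContinuousLinearMap.mul ℝ ℝ) (μ := (volume : Measure E3))
    (f := fun _ => (1:ℝ)) (f' := fun _ => 0) (g := fun x => (ψ x) i)
    (g' := fun x => (fderiv ℝ ψ x (EuclideanSpace.single i 1)) i)
    (v := EuclideanSpace.single i 1) (by simp) (by simpa using hi i)
    (by
      simp only [ContinuousLinearMap.mul_apply', one_mul]
      refine Continuous.integrable_of_hasCompactSupport
        ((EuclideanSpace.proj i : E3 →L[ℝ] ℝ).continuous.comp h1.continuous) ?_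
      exact h2.comp_left (g := fun y : E3 => y i) (by simp))
    (fun x _ => by simpa using (hasFDerivAt_const (1:ℝ) x).hasLineDerivAt _)
    (fun x _ => by simpa using (hcoord x).hasLineDerivAt _)
  simpa using this

lemma GsCut.finPer {K : Set E3} {C : ℝ} (hK : MeasurableSet K) (hc : GsCut K C) : HasFinPer K := by
  obtain ⟨v, h1, h2, h3, h4, h5, h6⟩ := hc
  refine ⟨C, ?_⟩
  rintro a ⟨φ, hφ1, hφ2, hφ3, rfl⟩
  have hv1 : ∀ n x, |v n x| ≤ 1 := fun n x => by
    rw [abs_of_nonneg (h3 n x)]; exact (h4 n x).trans (indicator_le_self' (by simp) x)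
  have hdi := divg_int hφ1 hφ2
  have hint1 : ∀ n, Integrable (fun x => v n x * divg φ x) := fun n =>
    ((h1 n).continuous.mul (divg_cont hφ1)).integrable_of_hasCompactSupport
      ((divg_supp hφ2).mul_left)
  have hint2 : ∀ n, Integrable (fun x => fderiv ℝ (v n) x (φ x)) := fun n => by
    refine (((h1 n).continuous_fderiv (by norm_num)).clm_apply
      hφ1.continuous).integrable_of_hasCompactSupport ?_
    refine hφ2.mono ?_
    intro x hx h0
    exact hx (by simp [h0])
  have step : ∀ n, ∫ x, v n x * divg φ x ≤ C := fun n => by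
    have e := gs_div_zero (ψ := fun x => v n x • φ x) ((h1 n).smul hφ1) (hφ2.smul_left (f := v n))
    simp only [divg_smul (h1 n) hφ1] at e
    rw [integral_add (hint1 n) (hint2 n)] at e
    have : ‖∫ x, fderiv ℝ (v n) x (φ x)‖ ≤ C := by
      refine le_trans (norm_integral_le_of_norm_le
        (g := fun x => ‖fderiv ℝ (v n) x‖) ?_ (Eventually.of_forall fun x => ?_)) (h6 n)
      · exact (((h1 n).continuous_fderiv (by norm_num)).integrable_of_hasCompactSupport
          ((h2 n).fderiv ℝ)).norm
      · exact ((fderiv ℝ (v n) x).le_opNorm _).trans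
            (mul_le_of_le_one_right (norm_nonneg _) (hφ3 x))
    have := (abs_le.1 this).1
    linarith
  have e : ∫ x in K, divg φ x = ∫ x, K.indicator (fun _ => (1:ℝ)) x * divg φ x := by
    rw [← integral_indicator hK]
    congr 1; ext x
    by_cases hx : x ∈ K <;> simp [hx]
  rw [e]
  refine le_of_tendsto' (tendsto_integral_of_dominated_convergence (fun x => ‖divg φ x‖)
    (fun n => (hint1 n).aestronglyMeasurable) hdi.norm
    (fun n => Eventually.of_forall fun z => ?_) (Eventually.of_forall fun z => ?_)) step
  · rw [norm_mul]
    exact mul_le_of_le_one_left (norm_nonneg _) (hv1 n _)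
  · exact (h5 _).mul_const _

/-- The smooth step has a bounded derivative. -/
lemma gs_step_deriv : ∃ M : ℝ, 0 < M ∧ ∀ t, ‖deriv Real.smoothTransition t‖ ≤ M := by
  have hc : Continuous (deriv Real.smoothTransition) :=
    (Real.smoothTransition.contDiff (n := 1)).continuous_deriv (by norm_num)
  obtain ⟨M, hM⟩ := (isCompact_Icc (a := (0:ℝ)) (b := 1)).exists_bound_of_continuousOn hc.continuousOn
  refine ⟨max M 1, by positivity, fun t => ?_⟩
  by_cases ht : t ∈ Icc (0:ℝ) 1
  · exact (hM t ht).trans (le_max_left _ _)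
  · have : deriv Real.smoothTransition t = 0 := by
      rw [mem_Icc, not_and_or, not_le, not_le] at ht
      rcases ht with ht | ht
      · have : Real.smoothTransition =ᶠ[𝓝 t] fun _ => 0 := by
          filter_upwards [Iio_mem_nhds ht] with s hs
          exact Real.smoothTransition.zero_of_nonpos hs.le
        rw [this.deriv_eq]; simp
      · have : Real.smoothTransition =ᶠ[𝓝 t] fun _ => 1 := by
          filter_upwards [Ioi_mem_nhds ht] with s hs
          exact Real.smoothTransition.one_of_one_le hs.le
        rw [this.deriv_eq]; simp
    rw [this]; simp

lemma gs_cut_aux {v : E3 → ℝ} {K K' : Set E3} {B : ℝ} (hK : MeasurableSet K)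
    (hK' : MeasurableSet K') (hKv : volume K ≠ ⊤)
    (h0 : ∀ x, 0 ≤ v x) (h1 : ∀ x, v x ≤ 1) (hz : ∀ x, x ∉ K → v x = 0) (ho : ∀ x ∈ K', v x = 1)
    (hB : ∀ x ∈ K, ‖fderiv ℝ v x‖ ≤ B) : ∫ x, ‖fderiv ℝ v x‖ ≤ B * vol (K \ K') := by
  have hvan : ∀ x, x ∉ K \ K' → ‖fderiv ℝ v x‖ = 0 := by
    intro x hx
    rw [Set.mem_sdiff, not_and_not_right] at hx
    rw [norm_eq_zero]
    by_cases hk : x ∈ K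
    · have : IsLocalMax v x := Eventually.of_forall fun y => by
        rw [ho x (hx hk)]; exact h1 y
      exact this.fderiv_eq_zero
    · have : IsLocalMin v x := Eventually.of_forall fun y => by
        rw [hz x hk]; exact h0 y
      exact this.fderiv_eq_zero
  rw [← setIntegral_eq_integral_of_forall_compl_eq_zero hvan]
  refine (le_abs_self _).trans ?_
  exact norm_setIntegral_le_of_norm_le_const (f := fun x => ‖fderiv ℝ v x‖)
    ((measure_mono sdiff_subset).trans_lt hKv.lt_top) (fun x hx => by simpa using hB x hx.1)

lemma gs_vol_ball {r : ℝ} (hr : 0 ≤ r) : vol (ball (0:E3) r) = r^3 * (Real.pi * 4 / 3) := by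
  unfold vol
  rw [EuclideanSpace.volume_ball_fin_three, ENNReal.toReal_mul, ENNReal.toReal_pow,
    ENNReal.toReal_ofReal hr, ENNReal.toReal_ofReal (by positivity)]

lemma gs_vol_cball {r : ℝ} (hr : 0 ≤ r) : vol (closedBall (0:E3) r) = r^3 * (Real.pi * 4 / 3) := by
  rw [← gs_vol_ball hr]
  unfold vol
  rw [Measure.addHaar_closedBall_eq_addHaar_ball]

lemma gs_finPer_empty : HasFinPer ∅ := by
  refine ⟨0, ?_⟩
  rintro a ⟨φ, -, -, -, rfl⟩
  simp

lemma gs_cut_ball {s : ℝ} (hs : 0 < s) : ∃ C, GsCut (ball (0:E3) s) C := by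
  obtain ⟨M, hM, hMb⟩ := gs_step_deriv
  set S := Real.smoothTransition with hS
  have hSc : ContDiff ℝ 1 S := Real.smoothTransition.contDiff
  let N : ℕ → ℝ := fun n => n + 1
  have hN : ∀ n, 1 ≤ N n := fun n => by simp [N]
  let q : ℕ → E3 → ℝ := fun n x => N n * (1 - ‖x‖^2 / s^2)
  have hq : ∀ n, ContDiff ℝ 1 (q n) := fun n => by
    have : ContDiff ℝ 1 (fun x : E3 => ‖x‖^2) := contDiff_norm_sq ℝ
    simp only [q]; fun_prop
  have hneg : ∀ n x, x ∉ ball (0:E3) s → q n x ≤ 0 := fun n x hx => by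
    rw [mem_ball_zero_iff, not_lt] at hx
    have : 1 ≤ ‖x‖^2 / s^2 := by rw [one_le_div (by positivity)]; gcongr
    have := hN n
    simp only [q]; nlinarith
  have hpos : ∀ x, x ∈ ball (0:E3) s → 0 < 1 - ‖x‖^2 / s^2 := fun x hx => by
    rw [mem_ball_zero_iff] at hx
    have : ‖x‖^2 / s^2 < 1 := by rw [div_lt_one (by positivity)]; gcongr
    linarith
  refine ⟨M * 2 / s * 3 * vol (ball (0:E3) s), fun n x => S (q n x), fun n => hSc.comp (hq n),
    fun n => ?_, fun n x => Real.smoothTransition.nonneg _, fun n x => ?_, fun x => ?_, fun n => ?_⟩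
  · refine HasCompactSupport.intro (isCompact_closedBall (0:E3) s) fun x hx => ?_
    exact Real.smoothTransition.zero_of_nonpos (hneg n x fun h => hx (ball_subset_closedBall h))
  · by_cases hx : x ∈ ball (0:E3) s
    · rw [indicator_of_mem hx]; exact Real.smoothTransition.le_one _
    · rw [indicator_of_notMem hx]; exact (Real.smoothTransition.zero_of_nonpos (hneg n x hx)).le
  · by_cases hx : x ∈ ball (0:E3) s
    · rw [indicator_of_mem hx]
      have h1 : Tendsto (fun n => q n x) atTop atTop :=
        (tendsto_atTop_add_const_right _ _ tendsto_natCast_atTop_atTop).atTop_mul_const (hpos x hx)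
      refine tendsto_const_nhds.congr' ?_
      filter_upwards [h1.eventually_ge_atTop 1] with n hn
      exact (Real.smoothTransition.one_of_one_le hn).symm
    · rw [indicator_of_notMem hx]
      refine tendsto_const_nhds.congr fun n => ?_
      exact (Real.smoothTransition.zero_of_nonpos (hneg n x hx)).symm
  · have hN1 := hN n
    have hNi : (N n)⁻¹ ≤ 1 := inv_le_one_of_one_le₀ hN1
    have hNi0 : 0 < (N n)⁻¹ := by positivity
    have hfr : ∀ x, HasFDerivAt (fun x => S (q n x))
        (deriv S (q n x) • (N n * (-(1/s^2))) • (2 • (innerSL ℝ x))) x := fun x => by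
      have h1 : HasFDerivAt (fun x : E3 => ‖x‖^2) (2 • (innerSL ℝ x)) x :=
        (hasStrictFDerivAt_norm_sq x).hasFDerivAt
      have h2 : HasFDerivAt (q n) ((N n * (-(1/s^2))) • (2 • (innerSL ℝ x))) x := by
        have := (((h1.const_mul (1/s^2)).const_sub 1).const_mul (N n))
        have e0 : q n = fun y => N n * (1 - 1 / s ^ 2 * ‖y‖ ^ 2) := by
          funext y; simp only [q]; ring
        rw [e0]
        refine this.congr_fderiv ?_
        ext y; simp; ring
      exact ((hSc.differentiable (by norm_num) (q n x)).hasDerivAt).comp_hasFDerivAt x h2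
    have := gs_cut_aux (v := fun x => S (q n x)) (K := ball (0:E3) s)
      (K' := closedBall (0:E3) (s * (1 - (N n)⁻¹))) (B := M * (N n * (1/s^2)) * (2 * s))
      measurableSet_ball measurableSet_closedBall measure_ball_lt_top.ne
      (fun x => Real.smoothTransition.nonneg _) (fun x => Real.smoothTransition.le_one _)
      (fun x hx => Real.smoothTransition.zero_of_nonpos (hneg n x hx))
      (fun x hx => Real.smoothTransition.one_of_one_le (by
        rw [mem_closedBall_zero_iff] at hx
        have h1 : ‖x‖^2 / s^2 ≤ (1 - (N n)⁻¹)^2 := by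
          rw [div_le_iff₀ (by positivity), ← mul_pow, mul_comm]; gcongr
        have h2 : N n * (N n)⁻¹ = 1 := mul_inv_cancel₀ (by positivity)
        simp only [q]
        nlinarith))
      (fun x hx => by
        rw [(hfr x).fderiv, norm_smul, norm_smul, mul_assoc]
        rw [mem_ball_zero_iff] at hx
        have e1 : ‖N n * (-(1/s^2))‖ = N n * (1/s^2) := by
          rw [mul_neg, norm_neg, Real.norm_eq_abs, abs_of_nonneg (by positivity)]
        rw [e1]
        gcongr
        · exact hMb _
        · rw [← Nat.cast_smul_eq_nsmul ℝ, norm_smul, innerSL_apply_norm]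
          simp; linarith)
    refine this.trans ?_
    have e2 : vol (ball (0:E3) s \ closedBall (0:E3) (s * (1 - (N n)⁻¹)))
        ≤ vol (ball (0:E3) s) * (3 * (N n)⁻¹) := by
      have hsub : closedBall (0:E3) (s * (1 - (N n)⁻¹)) ⊆ ball (0:E3) s :=
        closedBall_subset_ball (by nlinarith)
      have : vol (ball (0:E3) s \ closedBall (0:E3) (s * (1 - (N n)⁻¹))) = vol (ball (0:E3) s)
          - vol (closedBall (0:E3) (s * (1 - (N n)⁻¹))) :=
        measureReal_sdiff hsub measurableSet_closedBall
      have hp : 0 ≤ s * (1 - (N n)⁻¹) := mul_nonneg hs.le (by linarith)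
      rw [this, gs_vol_ball hs.le, gs_vol_cball hp]
      have h3 : 1 - (1 - (N n)⁻¹)^3 ≤ 3 * (N n)⁻¹ := by
        nlinarith [mul_nonneg (sq_nonneg (N n)⁻¹) (by linarith : 0 ≤ 3 - (N n)⁻¹)]
      have h4 : 0 ≤ s^3 * (Real.pi*4/3) := by positivity
      have := mul_le_mul_of_nonneg_left h3 h4
      nlinarith
    calc _ ≤ M * (N n * (1/s^2)) * (2 * s) * (vol (ball (0:E3) s) * (3 * (N n)⁻¹)) := by gcongr
      _ = _ := by field_simp

/-- The properties of a (scaled) tetrahedron that the sliding argument uses. -/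
structure GsTet (K : Set E3) (p : E3 → ℝ) : Prop where
  opn : IsOpen K
  bdd : IsBounded K
  cvx : Convex ℝ K
  cov : ∀ z, vol (K ∩ {u | u - z ∈ K}) = vol K * (max (1 - p z) 0)^3
  pc : Continuous p
  p0 : ∀ z, 0 ≤ p z
  ph : ∀ (t : ℝ) (z : E3), 0 ≤ t → p (t • z) = t * p z

lemma gs_vol_aff (K : Set E3) (z : E3) {r : ℝ} (hr : 0 < r) :
    vol {x | r⁻¹ • (x - z) ∈ K} = r^3 * vol K := by
  have h1 : {x | r⁻¹ • (x - z) ∈ K} = (fun x => x + (-z)) ⁻¹' ((fun x => r⁻¹ • x) ⁻¹' K) := by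
    ext x; simp [sub_eq_add_neg]
  unfold vol
  rw [h1, measure_preimage_add_right, Measure.addHaar_preimage_smul _ (inv_pos.2 hr).ne',
    ENNReal.toReal_mul, ENNReal.toReal_ofReal (abs_nonneg _)]
  congr 1
  simp [abs_of_pos hr]

lemma gs_bary {Δ : Set E3} (h : IsTetra Δ) : ∃ (a : Fin 4 → ℝ) (L : Fin 4 → E3 →L[ℝ] ℝ)
    (b : Fin 4 → E3), Δ = {x | ∀ i, 0 < a i + L i x} ∧ (∀ x, ∑ i, (a i + L i x) = 1) ∧
      ∀ i j, a i + L i (b j) = if i = j then 1 else 0 := by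
  obtain ⟨v, hv, rfl⟩ := h
  have ht : affineSpan ℝ (range v) = ⊤ := by
    rw [hv.affineSpan_eq_top_iff_card_eq_finrank_add_one]; simp
  let b : AffineBasis (Fin 4) ℝ E3 := ⟨v, hv, ht⟩
  have key : ∀ i x, b.coord i 0 + LinearMap.toContinuousLinearMap (b.coord i).linear x
      = b.coord i x := fun i x => by
    have := congrFun (AffineMap.decomp (b.coord i)) x
    simp only [Pi.add_apply] at this
    rw [this, add_comm]; rfl
  refine ⟨fun i => b.coord i 0, fun i => LinearMap.toContinuousLinearMap (b.coord i).linear,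
    v, ?_, ?_, ?_⟩
  · simp only [key]
    exact b.interior_convexHull
  · simp only [key]
    exact b.sum_coord_apply_eq_one
  · simp only [key]
    exact b.coord_apply

lemma gs_homothety {a : Fin 4 → ℝ} {L : Fin 4 → E3 →L[ℝ] ℝ} {b : Fin 4 → E3}
    (h1 : ∀ x, ∑ i, (a i + L i x) = 1) (h2 : ∀ i j, a i + L i (b j) = if i = j then 1 else 0)
    (c : Fin 4 → ℝ) :
    vol {x | ∀ i, c i < a i + L i x} = vol {x | ∀ i, 0 < a i + L i x} *
      (max (1 - ∑ i, c i) 0)^3 := by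
  rcases le_or_gt 1 (∑ i, c i) with hs | hs
  · have : {x | ∀ i, c i < a i + L i x} = ∅ := by
      ext x
      simp only [mem_ofPred_eq, mem_empty_iff_false, iff_false]
      intro hx
      have := Finset.sum_lt_sum_of_nonempty (s := Finset.univ) (by simp) fun i _ => hx i
      rw [h1] at this
      linarith
    rw [this, max_eq_right (by linarith)]
    simp [vol]
  · set s := ∑ i, c i
    have hp : 0 < 1 - s := by linarith
    rw [max_eq_left hp.le, mul_comm, ← gs_vol_aff _ (∑ j, c j • b j) hp]
    congr 1
    ext x
    simp only [mem_ofPred_eq]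
    refine forall_congr' fun i => ?_
    have e1 : ∑ j, c j * L i (b j) = c i - s * a i := by
      have : ∀ j, c j * L i (b j) = (if i = j then c j else 0) - c j * a i := fun j => by
        have := h2 i j
        split_ifs at this ⊢ with hh
        · rw [eq_sub_of_add_eq' this]; ring
        · rw [eq_sub_of_add_eq' this]; ring
      simp only [this, Finset.sum_sub_distrib, ← Finset.sum_mul]
      simp [s]
    have e2 : a i + L i ((1 - s)⁻¹ • (x - ∑ j, c j • b j)) =
        (1 - s)⁻¹ * (a i + L i x - c i) := by
      rw [map_smul, map_sub, map_sum]
      simp only [map_smul, smul_eq_mul]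
      rw [e1]
      field_simp
      ring
    rw [e2, mul_pos_iff_of_pos_left (inv_pos.2 hp), sub_pos]

lemma gs_tet {Δ : Set E3} (h : IsTetra Δ) : ∃ p C, GsTet Δ p ∧ GsCut Δ C := by
  have hbd : IsBounded Δ := by
    obtain ⟨v, hv, rfl⟩ := h
    exact (isBounded_convexHull.2 (finite_range v).isBounded).subset interior_subset
  have hop : IsOpen Δ := by
    obtain ⟨v, hv, rfl⟩ := h; exact isOpen_interior
  have hcv : Convex ℝ Δ := by
    obtain ⟨v, hv, rfl⟩ := h; exact (convex_convexHull ℝ _).interior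
  obtain ⟨a, L, b, hD, h1, h2⟩ := gs_bary h
  have hm : ∀ c : Fin 4 → ℝ, MeasurableSet {x | ∀ i, c i < a i + L i x} := fun c => by
    rw [ofPred_forall]
    refine MeasurableSet.iInter fun i => measurableSet_lt measurable_const ?_
    exact (by fun_prop : Continuous fun x => a i + L i x).measurable
  have hfin : volume Δ ≠ ⊤ := hbd.measure_lt_top.ne
  obtain ⟨M, hM, hMb⟩ := gs_step_deriv
  set S := Real.smoothTransition with hS
  have hSc : ContDiff ℝ 1 S := Real.smoothTransition.contDiff
  let N : ℕ → ℝ := fun n => n + 5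
  have hN : ∀ n, 5 ≤ N n := fun n => by simp [N]
  let v : ℕ → E3 → ℝ := fun n x => ∏ i, S (N n * (a i + L i x))
  have hvz : ∀ n x, x ∉ Δ → v n x = 0 := fun n x hx => by
    rw [hD, mem_ofPred_eq, not_forall] at hx
    obtain ⟨i, hi⟩ := hx
    refine Finset.prod_eq_zero (Finset.mem_univ i) (Real.smoothTransition.zero_of_nonpos ?_)
    have := hN n
    nlinarith
  have hv0 : ∀ n x, 0 ≤ v n x := fun n x =>
    Finset.prod_nonneg fun i _ => Real.smoothTransition.nonneg _
  have hv1 : ∀ n x, v n x ≤ 1 := fun n x =>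
    Finset.prod_le_one (fun i _ => Real.smoothTransition.nonneg _)
      fun i _ => Real.smoothTransition.le_one _
  have hvo : ∀ n x, (∀ i, (N n)⁻¹ < a i + L i x) → v n x = 1 := fun n x hx => by
    refine Finset.prod_eq_one fun i _ => Real.smoothTransition.one_of_one_le ?_
    have h5 := hN n
    have := (inv_lt_iff_one_lt_mul₀' (by linarith : 0 < N n)).1 (hx i)
    exact this.le
  refine ⟨fun z => ∑ i, max (L i z) 0, (∑ i, M * ‖L i‖) * (12 * vol Δ),
    ⟨hop, hbd, hcv, fun z => ?_, by fun_prop, fun z => ?_, fun t z ht => ?_⟩,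
    v, fun n => ?_, fun n => ?_, hv0, fun n x => ?_, fun x => ?_, fun n => ?_⟩
  · rw [hD, ← gs_homothety h1 h2]
    congr 1
    ext u
    simp only [mem_inter_iff, mem_ofPred_eq, ← forall_and, map_sub]
    refine forall_congr' fun i => ?_
    rw [max_lt_iff]
    constructor
    · rintro ⟨h1, h2⟩; constructor <;> linarith
    · rintro ⟨h1, h2⟩; constructor <;> linarith
  · exact Finset.sum_nonneg fun i _ => le_max_right _ _
  · rw [Finset.mul_sum]
    refine Finset.sum_congr rfl fun i _ => ?_
    rw [map_smul, smul_eq_mul, mul_max_of_nonneg _ _ ht, mul_zero]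
  · refine contDiff_prod fun i _ => hSc.comp ?_
    fun_prop
  · refine HasCompactSupport.intro (K := closure Δ) hbd.isCompact_closure fun x hx => ?_
    exact hvz n x fun h => hx (subset_closure h)
  · by_cases hx : x ∈ Δ
    · rw [indicator_of_mem hx]; exact hv1 n x
    · rw [indicator_of_notMem hx]; exact (hvz n x hx).le
  · by_cases hx : x ∈ Δ
    · rw [indicator_of_mem hx]
      have ht : Tendsto (fun n => (N n)⁻¹) atTop (𝓝 0) :=
        (tendsto_atTop_add_const_right _ _ tendsto_natCast_atTop_atTop).inv_tendsto_atTop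
      refine tendsto_const_nhds.congr' ?_
      have hx' := hx
      rw [hD] at hx'
      have : ∀ᶠ n in atTop, ∀ i, (N n)⁻¹ < a i + L i x :=
        eventually_all.2 fun i => ht.eventually_lt_const (hx' i)
      filter_upwards [this] with n hn
      exact (hvo n x hn).symm
    · rw [indicator_of_notMem hx]
      exact tendsto_const_nhds.congr fun n => (hvz n x hx).symm
  · have h5 := hN n
    have hn0 : 0 < N n := by linarith
    have hni : (N n)⁻¹ ≤ 5⁻¹ := inv_anti₀ (by norm_num) h5
    have hni0 : 0 < (N n)⁻¹ := inv_pos.2 hn0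
    have hfr : ∀ x, HasFDerivAt (v n) (∑ i, (∏ j ∈ Finset.univ.erase i, S (N n * (a j + L j x))) •
        (deriv S (N n * (a i + L i x)) • (N n • L i))) x := fun x => by
      refine HasFDerivAt.finsetProd (u := Finset.univ)
        (g := fun i x => S (N n * (a i + L i x))) fun i _ => ?_
      have h2 : HasFDerivAt (fun x => N n * (a i + L i x)) (N n • L i) x :=
        (((L i).hasFDerivAt).const_add (a i)).const_mul (N n)
      exact ((hSc.differentiable (by norm_num) (N n * (a i + L i x))).hasDerivAt).comp_hasFDerivAt x h2
    have := gs_cut_aux (v := v n) (K := Δ)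
      (K' := {x | ∀ i, (N n)⁻¹ < a i + L i x}) (B := (∑ i, M * ‖L i‖) * N n)
      hop.measurableSet (hm _) hfin (hv0 n) (hv1 n) (hvz n) (hvo n) (fun x hx => by
        rw [(hfr x).fderiv, Finset.sum_mul]
        refine (norm_sum_le _ _).trans (Finset.sum_le_sum fun i _ => ?_)
        rw [norm_smul, norm_smul, norm_smul]
        have e1 : ‖∏ j ∈ Finset.univ.erase i, S (N n * (a j + L j x))‖ ≤ 1 := by
          rw [Real.norm_eq_abs, abs_of_nonneg
            (Finset.prod_nonneg fun i _ => Real.smoothTransition.nonneg _)]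
          exact Finset.prod_le_one (fun i _ => Real.smoothTransition.nonneg _)
            fun i _ => Real.smoothTransition.le_one _
        rw [Real.norm_of_nonneg hn0.le]
        calc _ ≤ 1 * (M * (N n * ‖L i‖)) := by gcongr; exact hMb _
          _ = _ := by ring)
    refine this.trans ?_
    have hsub : {x | ∀ i, (N n)⁻¹ < a i + L i x} ⊆ Δ := by
      rw [hD]; intro x hx i; exact hni0.trans (hx i)
    have e2 : vol (Δ \ {x | ∀ i, (N n)⁻¹ < a i + L i x}) =
        vol Δ - vol {x | ∀ i, (N n)⁻¹ < a i + L i x} :=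
      measureReal_sdiff hsub (hm _) hfin
    have hV : 0 ≤ vol Δ := ENNReal.toReal_nonneg
    rw [e2, gs_homothety h1 h2, ← hD]
    have e3 : ∑ i : Fin 4, (N n)⁻¹ = 4 * (N n)⁻¹ := by simp
    rw [e3, max_eq_left (by linarith)]
    have e4 : vol Δ - vol Δ * (1 - 4 * (N n)⁻¹)^3 ≤ 12 * vol Δ * (N n)⁻¹ := by
      set t := (N n)⁻¹
      have : 1 - (1 - 4 * t)^3 ≤ 12 * t := by
        nlinarith [mul_nonneg (sq_nonneg t) (by linarith : 0 ≤ 3 - 4 * t)]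
      nlinarith [mul_le_mul_of_nonneg_left this hV]
    have hL : 0 ≤ ∑ i, M * ‖L i‖ := by positivity
    calc _ ≤ (∑ i, M * ‖L i‖) * N n * (12 * vol Δ * (N n)⁻¹) := by gcongr
      _ = _ := by field_simp

lemma gs_mem_smul {Δ : Set E3} {ℓ : ℝ} (hl : 0 < ℓ) (x : E3) : x ∈ ℓ • Δ ↔ ℓ⁻¹ • x ∈ Δ :=
  mem_smul_set_iff_inv_smul_mem₀ hl.ne' _ _

lemma gs_vol_smul {Δ : Set E3} {ℓ : ℝ} (hl : 0 < ℓ) : vol (ℓ • Δ) = ℓ^3 * vol Δ := by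
  rw [← gs_vol_aff Δ 0 hl]
  congr 1
  ext x
  rw [gs_mem_smul hl, mem_ofPred_eq, sub_zero]

lemma GsTet.scale {Δ : Set E3} {p : E3 → ℝ} (h : GsTet Δ p) {ℓ : ℝ} (hl : 0 < ℓ) :
    GsTet (ℓ • Δ) (fun z => p (ℓ⁻¹ • z)) where
  opn := h.opn.smul₀ hl.ne'
  bdd := h.bdd.smul₀ ℓ
  cvx := h.cvx.smul ℓ
  cov z := by
    have : (ℓ • Δ) ∩ {u | u - z ∈ ℓ • Δ} = ℓ • (Δ ∩ {u | u - ℓ⁻¹ • z ∈ Δ}) := by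
      ext x
      simp only [mem_inter_iff, gs_mem_smul hl, mem_ofPred_eq, smul_sub]
    rw [this, gs_vol_smul hl, gs_vol_smul hl, h.cov, mul_assoc]
  pc := h.pc.comp (continuous_const_smul _)
  p0 z := h.p0 _
  ph t z ht := by rw [smul_comm, h.ph _ _ ht]

lemma GsCut.scale {Δ : Set E3} {C : ℝ} (h : GsCut Δ C) {ℓ : ℝ} (hl : 0 < ℓ) :
    GsCut (ℓ • Δ) (ℓ^2 * C) := by
  obtain ⟨v, h1, h2, h3, h4, h5, h6⟩ := h
  have hi : ∀ x, Δ.indicator (fun _ => (1:ℝ)) (ℓ⁻¹ • x) = (ℓ • Δ).indicator (fun _ => (1:ℝ)) x := by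
    intro x
    by_cases hx : x ∈ ℓ • Δ
    · rw [indicator_of_mem hx, indicator_of_mem ((gs_mem_smul hl x).1 hx)]
    · rw [indicator_of_notMem hx, indicator_of_notMem (fun h => hx ((gs_mem_smul hl x).2 h))]
  refine ⟨fun n x => v n (ℓ⁻¹ • x), fun n => (h1 n).comp (contDiff_const_smul _), fun n => ?_,
    fun n x => h3 n _, fun n x => (h4 n _).trans (hi x).le, fun x => ?_, fun n => ?_⟩
  · exact (h2 n).comp_smul (inv_pos.2 hl).ne'
  · rw [← hi]; exact h5 _
  · have e : ∀ x, ‖fderiv ℝ (fun x => v n (ℓ⁻¹ • x)) x‖ = ℓ⁻¹ * ‖fderiv ℝ (v n) (ℓ⁻¹ • x)‖ := by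
      intro x
      rw [fderiv_comp_smul, norm_smul, Real.norm_of_nonneg (inv_pos.2 hl).le]
    simp only [e]
    rw [integral_const_mul, Measure.integral_comp_smul volume (fun x => ‖fderiv ℝ (v n) x‖) ℓ⁻¹]
    have : |((ℓ⁻¹) ^ Module.finrank ℝ E3)⁻¹| = ℓ^3 := by simp [abs_of_pos hl]
    rw [this, smul_eq_mul]
    calc _ = ℓ^2 * ∫ x, ‖fderiv ℝ (v n) x‖ := by field_simp
      _ ≤ _ := by gcongr; exact h6 n

lemma gs_disc (s : ℝ) : (volume {y : Fin 2 → ℝ | y 0 ^ 2 + y 1 ^ 2 < s}).toReal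
    = Real.pi * max s 0 := by
  have h := (PiLp.volume_preserving_ofLp (Fin 2)).measure_preimage
    (s := {y : Fin 2 → ℝ | y 0 ^ 2 + y 1 ^ 2 < s}) (by
      refine (measurableSet_lt ?_ measurable_const).nullMeasurableSet
      fun_prop)
  rw [← h]
  have : WithLp.ofLp ⁻¹' {y : Fin 2 → ℝ | y 0 ^ 2 + y 1 ^ 2 < s} =
      ball (0 : EuclideanSpace ℝ (Fin 2)) (√s) := by
    ext y
    rw [mem_ball_zero_iff, EuclideanSpace.norm_eq, Real.sqrt_lt_sqrt_iff (by positivity)]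
    simp
  rw [this, EuclideanSpace.volume_ball_fin_two, ENNReal.toReal_mul, ENNReal.toReal_pow,
    ENNReal.toReal_ofReal (Real.sqrt_nonneg _), ENNReal.toReal_ofReal Real.pi_pos.le, mul_comm]
  congr 1
  rcases le_total 0 s with h | h
  · rw [Real.sq_sqrt h, max_eq_left h]
  · rw [Real.sqrt_eq_zero_of_nonpos h, max_eq_right h]; norm_num

lemma gs_slice0 {F : ℝ → ℝ} (hF : Continuous F) {a : ℝ} (ha : 0 < a) :
    ∫ w in ball (0:E3) a, F (w 0) = ∫ t, Real.pi * max (a^2 - t^2) 0 * F t := by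
  let G : ℝ × (Fin 2 → ℝ) → ℝ := fun q =>
    {q : ℝ × (Fin 2 → ℝ) | q.2 0 ^ 2 + q.2 1 ^ 2 < a^2 - q.1^2}.indicator (fun q => F q.1) q
  have hms : MeasurableSet {q : ℝ × (Fin 2 → ℝ) | q.2 0 ^ 2 + q.2 1 ^ 2 < a^2 - q.1^2} := by
    refine measurableSet_lt ?_ ?_ <;> fun_prop
  have mp1 : MeasurePreserving (MeasurableEquiv.toLp 2 (Fin 3 → ℝ)).symm volume volume :=
    EuclideanSpace.volume_preserving_symm_measurableEquiv_toLp (Fin 3)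
  have mp2 := volume_preserving_piFinSuccAbove (fun _ : Fin 3 => ℝ) 0
  have mp := mp2.comp mp1
  let e := (MeasurableEquiv.toLp 2 (Fin 3 → ℝ)).symm.trans
    (MeasurableEquiv.piFinSuccAbove (fun _ : Fin 3 => ℝ) 0)
  have mp' : MeasurePreserving e volume (volume.prod volume) := mp
  have hGe : ∀ w : E3, (ball (0:E3) a).indicator (fun w => F (w 0)) w = G (e w) := by
    intro w
    have e1 : (e w).1 = w 0 := rfl
    have e2 : (e w).2 0 = w 1 := rfl
    have e3 : (e w).2 1 = w 2 := rfl
    have : w ∈ ball (0:E3) a ↔ e w ∈ {q : ℝ × (Fin 2 → ℝ) | q.2 0 ^ 2 + q.2 1 ^ 2 < a^2 - q.1^2} := by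
      rw [mem_ofPred_eq, e1, e2, e3, mem_ball_zero_iff, EuclideanSpace.norm_eq,
        Real.sqrt_lt' ha, Fin.sum_univ_three]
      simp only [Real.norm_eq_abs, sq_abs]
      constructor <;> intro h <;> linarith
    by_cases hw : w ∈ ball (0:E3) a
    · simp only [G]
      rw [indicator_of_mem hw, indicator_of_mem (this.1 hw), e1]
    · simp only [G]
      rw [indicator_of_notMem hw, indicator_of_notMem (fun h => hw (this.2 h))]
  have hint : IntegrableOn (fun w : E3 => F (w 0)) (ball (0:E3) a) :=
    (((hF.comp (EuclideanSpace.proj (𝕜 := ℝ) (0 : Fin 3)).continuous).locallyIntegrable).integrableOn_isCompact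
      (isCompact_closedBall (0:E3) a)).mono_set ball_subset_closedBall
  have hGi : Integrable G (volume.prod volume) := by
    have h := (integrable_indicator_iff measurableSet_ball).2 hint
    rw [show (ball (0:E3) a).indicator (fun w => F (w 0)) = G ∘ e from funext hGe] at h
    exact (mp'.integrable_comp_emb e.measurableEmbedding).1 h
  rw [← integral_indicator measurableSet_ball]
  simp only [hGe]
  rw [mp'.integral_comp' G, integral_prod _ hGi]
  refine integral_congr_ae (Eventually.of_forall fun t => ?_)
  simp only
  have : ∀ y, G (t, y) = {y : Fin 2 → ℝ | y 0 ^ 2 + y 1 ^ 2 < a^2 - t^2}.indicator (fun _ => F t) y :=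
    fun y => rfl
  simp only [this]
  rw [integral_indicator_const, smul_eq_mul, measureReal_def, gs_disc]
  refine measurableSet_lt ?_ ?_ <;> fun_prop

lemma gs_rot (x y : E3) (h : ‖x‖ = ‖y‖) : ∃ A : E3 ≃ₗᵢ[ℝ] E3, A x = y :=
  ⟨_, Submodule.reflection_sub h⟩

lemma gs_slice {F : ℝ → ℝ} (hF : Continuous F) {a : ℝ} (ha : 0 < a) (x : E3) :
    ∫ w in ball (0:E3) a, F (inner ℝ w x) = ∫ t, Real.pi * max (a^2 - t^2) 0 * F (‖x‖ * t) := by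
  obtain ⟨A, hA⟩ := gs_rot x (EuclideanSpace.single 0 ‖x‖) (by simp)
  have h1 : ∀ w, F (inner ℝ w x) = F (‖x‖ * (A w) 0) := fun w => by
    rw [← A.inner_map_map w x, hA, EuclideanSpace.inner_single_right]; simp
  simp only [h1]
  rw [← gs_slice0 (F := fun t => F (‖x‖ * t)) (by fun_prop) ha]
  have := A.measurePreserving.setIntegral_preimage_emb A.toHomeomorph.measurableEmbedding
    (fun w => F (‖x‖ * w 0)) (ball 0 a)
  rw [← this]
  congr 2
  rw [A.preimage_ball]; simp

/-- Squared truncated linear profile. -/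
def gsH (t : ℝ) : ℝ := (max (1 - |t|) 0)^2 / 2

lemma gsH_cont : Continuous gsH := by unfold gsH; fun_prop

lemma gsH_nonneg (t : ℝ) : 0 ≤ gsH t := by unfold gsH; positivity

lemma gsH_le (t : ℝ) : gsH t ≤ 1/2 := by
  unfold gsH
  have h1 : max (1 - |t|) 0 ≤ 1 := max_le (by linarith [abs_nonneg t]) (by norm_num)
  have h2 : 0 ≤ max (1 - |t|) 0 := le_max_right _ _
  nlinarith

lemma gs_area (s t : ℝ) : (volume {q : ℝ × ℝ | (q.1 < s ∧ s < q.2 ∧ q.2 < q.1 + 1) ∧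
    (q.1 < t ∧ t < q.2 ∧ q.2 < q.1 + 1)}).toReal = gsH (s - t) := by
  have hst : max s t - min s t = |s - t| := max_sub_min_eq_abs' s t
  have e : {q : ℝ × ℝ | (q.1 < s ∧ s < q.2 ∧ q.2 < q.1 + 1) ∧
    (q.1 < t ∧ t < q.2 ∧ q.2 < q.1 + 1)} = regionBetween (fun _ => max s t) (fun u => u + 1)
      (Ioo (max s t - 1) (min s t)) := by
    ext ⟨u, v⟩
    simp only [regionBetween, mem_ofPred_eq, mem_Ioo, lt_min_iff, max_lt_iff]
    constructor
    · rintro ⟨⟨a, b, c⟩, d, e, f⟩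
      refine ⟨⟨?_, a, d⟩, ⟨b, e⟩, c⟩
      have := max_lt b e
      linarith
    · rintro ⟨⟨a, b, c⟩, ⟨d, e⟩, f⟩
      exact ⟨⟨b, d, f⟩, c, e, f⟩
  rw [e, Measure.volume_eq_prod, volume_regionBetween_eq_integral]
  · rcases le_total (max s t - 1) (min s t) with h | h
    · have : ∫ y in Ioo (max s t - 1) (min s t), ((fun u : ℝ => u + 1) - (fun _ : ℝ => max s t) : ℝ → ℝ) y =
          (1 - |s - t|)^2/2 := by
        rw [← integral_Ioc_eq_integral_Ioo, ← intervalIntegral.integral_of_le h]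
        simp only [Pi.sub_apply]
        rw [intervalIntegral.integral_sub (by simp) (by simp), intervalIntegral.integral_add (by simp) (by simp)]
        simp only [integral_id, intervalIntegral.integral_const, smul_eq_mul]
        rw [← hst]; ring
      rw [this, ENNReal.toReal_ofReal (by positivity), gsH, max_eq_left (by linarith : 0 ≤ 1 - |s - t|)]
    · rw [Ioo_eq_empty (by linarith), gsH, max_eq_right (by linarith : 1 - |s - t| ≤ 0)]
      simp
  · exact integrableOn_const (by simp)
  · exact (Continuous.integrableOn_Icc (by fun_prop)).mono_set Ioo_subset_Icc_self
  · exact measurableSet_Ioo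
  · rintro u ⟨h1, h2⟩; linarith

/-- Abstract positivity. -/
lemma gs_pd {Θ : Type*} [MeasurableSpace Θ] (ν : Measure Θ) [IsFiniteMeasure ν] {R : ℝ} {f : E3 → ℝ}
    (hf : GsNice R f) (g : Θ → E3 → ℝ) (hg : Measurable (Function.uncurry g))
    (hb : ∀ θ x, |g θ x| ≤ 1) :
    Integrable (fun z : E3 × E3 => f z.1 * f z.2 * ∫ θ, g θ z.1 * g θ z.2 ∂ν) (volume.prod volume) ∧
    0 ≤ ∫ z : E3 × E3, f z.1 * f z.2 * ∫ θ, g θ z.1 * g θ z.2 ∂ν ∂(volume.prod volume) := by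
  have hm := hf.meas
  have hi : Integrable (fun w : (E3 × E3) × Θ => f w.1.1 * f w.1.2 * (g w.2 w.1.1 * g w.2 w.1.2))
      ((volume.prod volume).prod ν) := by
    have h1 : Integrable (fun z : E3 × E3 => f z.1 * f z.2) (volume.prod volume) :=
      hf.integrable.mul_prod hf.integrable
    have h2 : Integrable (fun w : (E3 × E3) × Θ => (f w.1.1 * f w.1.2) * (1:ℝ))
      ((volume.prod volume).prod ν) := h1.mul_prod (integrable_const (1:ℝ))
    refine h2.mono ?_ (Eventually.of_forall fun w => ?_)
    · refine Measurable.aestronglyMeasurable ?_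
      have a1 : Measurable (fun w : (E3 × E3) × Θ => g w.2 w.1.1) :=
        hg.comp (by fun_prop : Measurable fun w : (E3 × E3) × Θ => (w.2, w.1.1))
      have a2 : Measurable (fun w : (E3 × E3) × Θ => g w.2 w.1.2) :=
        hg.comp (by fun_prop : Measurable fun w : (E3 × E3) × Θ => (w.2, w.1.2))
      fun_prop
    · rw [norm_mul, norm_mul (_ * _) (1:ℝ)]
      gcongr
      rw [norm_mul, norm_one]
      exact mul_le_one₀ (hb _ _) (norm_nonneg _) (hb _ _)
  refine ⟨?_, ?_⟩
  · have := hi.integral_prod_left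
    simpa only [integral_const_mul] using this
  · simp only [← integral_const_mul]
    rw [integral_integral_swap hi]
    refine integral_nonneg fun θ => ?_
    have : ∀ z : E3 × E3, f z.1 * f z.2 * (g θ z.1 * g θ z.2) =
        (f z.1 * g θ z.1) * (f z.2 * g θ z.2) := fun z => by ring
    simp only [this]
    rw [integral_prod_mul (fun x => f x * g θ x) (fun x => f x * g θ x)]
    exact mul_self_nonneg _

/-- Shell average. -/
def gsSh (q ε : ℝ) (x : E3) : ℝ := ∫ w in ball (0:E3) (1+ε) \ ball (0:E3) 1, gsH (q * inner ℝ w x)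

lemma gs_shell_pos {R : ℝ} {f : E3 → ℝ} (hf : GsNice R f) {q ε : ℝ} (hq : 0 ≤ q)
    (h1 : ε ≤ 1) :
    Integrable (fun z : E3 × E3 => f z.1 * f z.2 * gsSh q ε (z.1 - z.2)) (volume.prod volume) ∧
    0 ≤ ∫ z : E3 × E3, f z.1 * f z.2 * gsSh q ε (z.1 - z.2) ∂(volume.prod volume) := by
  let D : ℝ := q * (2 * R) + 1
  let box : Set (ℝ × ℝ) := Icc (-D) D ×ˢ Icc (-D) D
  have hbox : volume box ≠ ⊤ := ((isCompact_Icc.prod isCompact_Icc).measure_lt_top).ne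
  let sh : Set E3 := ball (0:E3) (1+ε) \ ball (0:E3) 1
  have hshm : MeasurableSet sh := measurableSet_ball.diff measurableSet_ball
  have hsh : volume sh ≠ ⊤ := measure_ne_top_of_subset sdiff_subset measure_ball_lt_top.ne
  have : IsFiniteMeasure ((volume : Measure (ℝ × ℝ)).restrict box) := ⟨by simpa using hbox.lt_top⟩
  have : IsFiniteMeasure ((volume : Measure E3).restrict sh) := ⟨by simpa using hsh.lt_top⟩
  let ν := ((volume : Measure E3).restrict sh).prod ((volume : Measure (ℝ × ℝ)).restrict box)
  let S : Set ((E3 × (ℝ × ℝ)) × E3) := {w | w.1.2.1 < q * inner ℝ w.1.1 w.2 ∧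
    q * inner ℝ w.1.1 w.2 < w.1.2.2 ∧ w.1.2.2 < w.1.2.1 + 1}
  have hS : MeasurableSet S := by
    have a1 : Measurable fun w : (E3 × (ℝ × ℝ)) × E3 => q * inner ℝ w.1.1 w.2 := by fun_prop
    have a2 : Measurable fun w : (E3 × (ℝ × ℝ)) × E3 => w.1.2.1 := by fun_prop
    have a3 : Measurable fun w : (E3 × (ℝ × ℝ)) × E3 => w.1.2.2 := by fun_prop
    exact (measurableSet_lt a2 a1).inter ((measurableSet_lt a1 a3).inter
      (measurableSet_lt a3 (a2.add_const 1)))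
  let g : E3 × (ℝ × ℝ) → E3 → ℝ := fun θ x => S.indicator (fun _ => (1:ℝ)) (θ, x)
  have key := gs_pd ν hf g (measurable_const.indicator hS) (fun θ x => by
    simp only [g]
    by_cases h : (θ, x) ∈ S
    · rw [indicator_of_mem h]; simp
    · rw [indicator_of_notMem h]; simp)
  have hK : ∀ z : E3 × E3, f z.1 * f z.2 * ∫ θ, g θ z.1 * g θ z.2 ∂ν =
      f z.1 * f z.2 * gsSh q ε (z.1 - z.2) := by
    rintro ⟨x, y⟩
    simp only
    rcases le_or_gt R ‖x‖ with hx | hx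
    · rw [hf.zero hx]; ring
    rcases le_or_gt R ‖y‖ with hy | hy
    · rw [hf.zero hy]; ring
    congr 1
    have hgg : ∀ θ : E3 × (ℝ × ℝ), g θ x * g θ y = {θ : E3 × (ℝ × ℝ) | (θ, x) ∈ S ∧ (θ, y) ∈ S}.indicator
        (fun _ => (1:ℝ)) θ := fun θ => by
      have hP : θ ∈ {θ : E3 × (ℝ × ℝ) | (θ, x) ∈ S ∧ (θ, y) ∈ S} ↔ (θ, x) ∈ S ∧ (θ, y) ∈ S := Iff.rfl
      simp only [g]
      by_cases h1 : (θ, x) ∈ S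
      · by_cases h2 : (θ, y) ∈ S
        · rw [indicator_of_mem h1, indicator_of_mem h2, indicator_of_mem (hP.2 ⟨h1, h2⟩)]; simp
        · rw [indicator_of_notMem h2, indicator_of_notMem (fun h => h2 (hP.1 h).2)]; simp
      · rw [indicator_of_notMem h1, indicator_of_notMem (fun h => h1 (hP.1 h).1)]; simp
    have hSm : MeasurableSet {θ : E3 × (ℝ × ℝ) | (θ, x) ∈ S ∧ (θ, y) ∈ S} :=
      (hS.preimage (by fun_prop : Measurable fun θ : E3 × (ℝ × ℝ) => (θ, x))).inter
        (hS.preimage (by fun_prop : Measurable fun θ : E3 × (ℝ × ℝ) => (θ, y)))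
    simp only [hgg]
    rw [integral_prod _ ((integrable_const (1:ℝ)).indicator hSm)]
    unfold gsSh
    refine setIntegral_congr_fun hshm fun w hw => ?_
    beta_reduce
    have hwn : ‖w‖ ≤ 2 := by
      have := hw.1
      rw [mem_ball_zero_iff] at this
      linarith
    have hbd : ∀ u : E3, ‖u‖ < R → |q * inner ℝ w u| ≤ q * (2 * R) := fun u hu => by
      rw [abs_mul, abs_of_nonneg hq]
      have := abs_real_inner_le_norm w u
      have : ‖w‖ * ‖u‖ ≤ 2 * R := by gcongr
      gcongr; linarith
    have hsec : ∀ b : ℝ × ℝ, {θ : E3 × (ℝ × ℝ) | (θ, x) ∈ S ∧ (θ, y) ∈ S}.indicator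
        (fun _ => (1:ℝ)) (w, b) = {b : ℝ × ℝ | (b.1 < q * inner ℝ w x ∧ q * inner ℝ w x < b.2 ∧
          b.2 < b.1 + 1) ∧ (b.1 < q * inner ℝ w y ∧ q * inner ℝ w y < b.2 ∧
          b.2 < b.1 + 1)}.indicator (fun _ => (1:ℝ)) b := fun b => rfl
    simp only [hsec]
    rw [inner_sub_right, mul_sub, ← gs_area]
    set T := {b : ℝ × ℝ | (b.1 < q * inner ℝ w x ∧ q * inner ℝ w x < b.2 ∧
          b.2 < b.1 + 1) ∧ (b.1 < q * inner ℝ w y ∧ q * inner ℝ w y < b.2 ∧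
          b.2 < b.1 + 1)} with hT
    have hTm : MeasurableSet T := hSm.preimage (by fun_prop : Measurable fun b : ℝ × ℝ => (w, b))
    rw [integral_indicator_const _ hTm, smul_eq_mul, mul_one, measureReal_def,
      Measure.restrict_apply hTm]
    congr 2
    rw [inter_eq_left]
    rintro ⟨u, v⟩ ⟨⟨b1, b2, b3⟩, -⟩
    have := abs_le.1 (hbd x hx)
    simp only at b1 b2 b3
    simp only [box, D, mem_prod, mem_Icc]
    refine ⟨⟨?_, ?_⟩, ?_, ?_⟩ <;> linarith
  simp only [hK] at key
  exact key

/-- The covariogram profile. -/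
def gsCov (t : ℝ) : ℝ := (max (1 - t) 0)^3

lemma gsCov_cont : Continuous gsCov := by unfold gsCov; fun_prop

lemma gsCov_nonneg (t : ℝ) : 0 ≤ gsCov t := by unfold gsCov; positivity

lemma gsCov_le {t : ℝ} (ht : 0 ≤ t) : gsCov t ≤ 1 := by
  unfold gsCov
  exact pow_le_one₀ (le_max_right _ _) (max_le (by linarith) (by norm_num))

lemma gs_cube_deriv (u : ℝ) : HasDerivAt (fun u : ℝ => (max u 0)^3) (3 * (max u 0)^2) u := by
  rcases lt_trichotomy u 0 with h | h | h
  · have : (fun u : ℝ => (max u 0)^3) =ᶠ[𝓝 u] fun _ => 0 := by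
      filter_upwards [gt_mem_nhds h] with v hv
      rw [max_eq_right (le_of_lt hv)]; norm_num
    rw [max_eq_right h.le]
    simpa using (hasDerivAt_const u (0:ℝ)).congr_of_eventuallyEq this
  · subst h
    rw [hasDerivAt_iff_isLittleO_nhds_zero]
    simp only [zero_add, max_self]
    norm_num
    refine Asymptotics.IsBigO.trans_isLittleO (g := fun h : ℝ => h^3) ?_ ?_
    · refine Asymptotics.IsBigO.of_bound 1 (Eventually.of_forall fun v => ?_)
      rw [norm_pow, norm_pow, one_mul]
      gcongr
      rw [Real.norm_eq_abs, Real.norm_eq_abs, abs_of_nonneg (le_max_right _ _)]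
      exact max_le (le_abs_self v) (abs_nonneg v)
    · exact Asymptotics.isLittleO_pow_id (by norm_num)
  · have : (fun u : ℝ => (max u 0)^3) =ᶠ[𝓝 u] fun u => u^3 := by
      filter_upwards [lt_mem_nhds h] with v hv
      rw [max_eq_left (le_of_lt hv)]
    rw [max_eq_left h.le]
    simpa using (hasDerivAt_pow 3 u).congr_of_eventuallyEq this

lemma gs_W {κ : ℝ} (hκ : 0 < κ) :
    ∫ t in (-1:ℝ)..1, gsH (κ * t) = (1 - gsCov κ) / (3 * κ) := by
  have hc : Continuous fun t => gsH (κ * t) := gsH_cont.comp (by fun_prop)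
  have h0 : ∫ t in (0:ℝ)..1, gsH (κ * t) = (1 - gsCov κ) / (6 * κ) := by
    have : ∀ t ∈ uIcc (0:ℝ) 1, HasDerivAt (fun t => -(max (1 - κ * t) 0)^3 / (6 * κ)) (gsH (κ * t)) t := by
      intro t ht
      rw [uIcc_of_le zero_le_one] at ht
      have h1 : HasDerivAt (fun t => 1 - κ * t) (-κ) t := by
        simpa using ((hasDerivAt_id t).const_mul κ).const_sub 1
      have h2 := ((gs_cube_deriv (1 - κ * t)).comp t h1).neg.div_const (6 * κ)
      refine h2.congr_deriv ?_
      unfold gsH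
      rw [abs_of_nonneg (by have := ht.1; positivity)]
      field_simp
      ring
    rw [intervalIntegral.integral_eq_sub_of_hasDerivAt this (hc.intervalIntegrable _ _)]
    unfold gsCov
    simp
    ring
  have h1 : ∫ t in (-1:ℝ)..0, gsH (κ * t) = ∫ t in (0:ℝ)..1, gsH (κ * t) := by
    have := intervalIntegral.integral_comp_neg (fun t => gsH (κ * t)) (a := (0:ℝ)) (b := 1)
    rw [neg_zero] at this
    rw [← this]
    congr 1; ext t
    unfold gsH
    rw [mul_neg, abs_neg]
  rw [← intervalIntegral.integral_add_adjacent_intervals (hc.intervalIntegrable _ 0)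
    (hc.intervalIntegrable _ _), h1, h0]
  field_simp; ring

lemma gs_shell_est {q ε : ℝ} (h0 : 0 < ε) (x : E3) :
    |gsSh q ε x - Real.pi * (2 * ε + ε^2) * ∫ t in (-1:ℝ)..1, gsH (q * ‖x‖ * t)|
      ≤ Real.pi * (2 * ε + ε^2) * ε := by
  have hH : Continuous fun s => gsH (q * s) := gsH_cont.comp (by fun_prop)
  have hsub : ball (0:E3) 1 ⊆ ball (0:E3) (1+ε) := ball_subset_ball (by linarith)
  have hint : IntegrableOn (fun w : E3 => gsH (q * inner ℝ w x)) (ball (0:E3) (1+ε)) :=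
    ((hH.comp (by fun_prop : Continuous fun w : E3 => inner ℝ w x)).locallyIntegrable.integrableOn_isCompact
      (isCompact_closedBall (0:E3) (1+ε))).mono_set ball_subset_closedBall
  have e1 : gsSh q ε x = (∫ t, Real.pi * max ((1+ε)^2 - t^2) 0 * gsH (q * (‖x‖ * t))) -
      ∫ t, Real.pi * max (1^2 - t^2) 0 * gsH (q * (‖x‖ * t)) := by
    unfold gsSh
    rw [setIntegral_sdiff measurableSet_ball hint hsub,
      gs_slice (F := fun s => gsH (q * s)) hH (by linarith) x,
      gs_slice (F := fun s => gsH (q * s)) hH (by norm_num) x]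
  have hcs : ∀ a : ℝ, 0 ≤ a → Integrable (fun t => Real.pi * max (a^2 - t^2) 0 * gsH (q * (‖x‖ * t))) := by
    intro a ha
    refine Continuous.integrable_of_hasCompactSupport ?_ ?_
    · exact (by fun_prop : Continuous fun t : ℝ => Real.pi * max (a^2 - t^2) 0).mul
        (gsH_cont.comp (by fun_prop))
    · refine HasCompactSupport.intro (isCompact_Icc (a := -a) (b := a)) fun t ht => ?_
      have : a^2 - t^2 ≤ 0 := by
        by_contra hh
        push Not at hh
        exact ht (abs_le.1 (abs_le_of_sq_le_sq (by linarith) ha))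
      rw [max_eq_right this]; ring
  have hI1 : Integrable ((Icc (-1:ℝ) 1).indicator fun t => gsH (q * ‖x‖ * t)) := by
    refine (integrable_indicator_iff measurableSet_Icc).2 (Continuous.integrableOn_Icc ?_)
    exact gsH_cont.comp (by fun_prop)
  have e2 : ∫ t in (-1:ℝ)..1, gsH (q * ‖x‖ * t) =
      ∫ t, (Icc (-1:ℝ) 1).indicator (fun t => gsH (q * ‖x‖ * t)) t := by
    rw [integral_indicator measurableSet_Icc, intervalIntegral.integral_of_le (by norm_num),
      integral_Icc_eq_integral_Ioc]
  have hd : Integrable (fun t => Real.pi * max ((1+ε)^2 - t^2) 0 * gsH (q * (‖x‖ * t)) -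
      Real.pi * max (1^2 - t^2) 0 * gsH (q * (‖x‖ * t))) :=
    (hcs _ (by linarith)).sub (hcs _ (by norm_num))
  rw [e1, e2, ← integral_sub (hcs _ (by linarith)) (hcs _ (by norm_num)), ← integral_const_mul,
    ← integral_sub hd (hI1.const_mul _)]
  have hi2 : Integrable ((Icc (-(1+ε):ℝ) (1+ε)).indicator fun _ => (1:ℝ)) :=
    (integrable_indicator_iff measurableSet_Icc).2 (integrableOn_const (by simp))
  have hi3 : Integrable ((Icc (-1:ℝ) 1).indicator fun _ => (1:ℝ)) :=
    (integrable_indicator_iff measurableSet_Icc).2 (integrableOn_const (by simp))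
  have hb : ∫ t, Real.pi * (2 * ε + ε^2) * (1/2) * ((Icc (-(1+ε):ℝ) (1+ε)).indicator (fun _ => (1:ℝ)) t -
      (Icc (-1:ℝ) 1).indicator (fun _ => (1:ℝ)) t) = Real.pi * (2 * ε + ε^2) * ε := by
    rw [integral_const_mul, integral_sub hi2 hi3, integral_indicator_const _ measurableSet_Icc,
      integral_indicator_const _ measurableSet_Icc]
    simp only [Real.volume_real_Icc, smul_eq_mul]
    rw [max_eq_left (by linarith), max_eq_left (by norm_num)]
    ring
  rw [← hb, ← Real.norm_eq_abs]
  refine norm_integral_le_of_norm_le ((hi2.sub hi3).const_mul _) (Eventually.of_forall fun t => ?_)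
  have hn := gsH_nonneg (q * (‖x‖ * t))
  have hl := gsH_le (q * (‖x‖ * t))
  have hp := Real.pi_pos
  simp only [← mul_assoc q] at *
  set h := gsH (q * ‖x‖ * t)
  rcases le_or_gt (t^2) 1 with c1 | c1
  · have m1 : t ∈ Icc (-1:ℝ) 1 := abs_le.1 (abs_le_of_sq_le_sq (by linarith) (by norm_num))
    have m2 : t ∈ Icc (-(1+ε):ℝ) (1+ε) := ⟨by linarith [m1.1], by linarith [m1.2]⟩
    rw [indicator_of_mem m1, indicator_of_mem m1, indicator_of_mem m2, max_eq_left (by nlinarith),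
      max_eq_left (by linarith)]
    rw [sub_self, mul_zero, norm_le_zero_iff]
    ring
  · have m1 : t ∉ Icc (-1:ℝ) 1 := fun hm => by
      have := hm.1; have := hm.2; nlinarith
    rw [indicator_of_notMem m1, indicator_of_notMem m1]
    rcases le_or_gt (t^2) ((1+ε)^2) with c2 | c2
    · have m2 : t ∈ Icc (-(1+ε):ℝ) (1+ε) := abs_le.1 (abs_le_of_sq_le_sq c2 (by linarith))
      rw [indicator_of_mem m2, max_eq_left (by linarith), max_eq_right (by linarith)]
      have h1 : 0 ≤ (1+ε)^2 - t^2 := by linarith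
      have h2 : (1+ε)^2 - t^2 ≤ 2*ε+ε^2 := by nlinarith
      have : ‖Real.pi * ((1+ε)^2 - t^2) * h - Real.pi * 0 * h - Real.pi * (2*ε+ε^2) * 0‖
          = Real.pi * ((1+ε)^2 - t^2) * h := by
        rw [mul_zero, zero_mul, mul_zero, sub_zero, sub_zero, Real.norm_of_nonneg (by positivity)]
      rw [this, sub_zero, mul_one]
      gcongr
    · have m2 : t ∉ Icc (-(1+ε):ℝ) (1+ε) := fun hm => by
        have := hm.1; have := hm.2; nlinarith
      rw [indicator_of_notMem m2, max_eq_right (by linarith), max_eq_right (by linarith)]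
      simp

lemma gs_offdiag : ∀ᵐ z : E3 × E3 ∂(volume.prod volume), z.1 ≠ z.2 := by
  rw [ae_iff]
  simp only [not_not]
  have hm : MeasurableSet {z : E3 × E3 | z.1 = z.2} := measurableSet_eq_fun measurable_fst measurable_snd
  rw [Measure.measure_prod_null hm]
  refine Eventually.of_forall fun x => ?_
  have : Prod.mk x ⁻¹' {z : E3 × E3 | z.1 = z.2} = {x} := by
    ext y; simp [eq_comm]
  simp [this]

lemma GsNice.pair_bdd {R : ℝ} {f : E3 → ℝ} (h : GsNice R f) {m : E3 × E3 → ℝ} (hm : Measurable m)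
    (hb : ∀ z, |m z| ≤ 1) :
    Integrable (fun z : E3 × E3 => m z * (f z.1 * f z.2 / ‖z.1 - z.2‖)) (volume.prod volume) :=
  h.pair.bdd_mul hm.aestronglyMeasurable (Eventually.of_forall hb)

lemma gs_w_pos {R : ℝ} {f : E3 → ℝ} (hf : GsNice R f) {q : ℝ} (hq : 0 ≤ q) :
    0 ≤ ∫ z : E3 × E3, (1 - gsCov (q * ‖z.1 - z.2‖)) * (f z.1 * f z.2 / ‖z.1 - z.2‖)
      ∂(volume.prod volume) := by
  rcases hq.eq_or_lt with rfl | hq0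
  · simp [gsCov]
  have hm : Measurable fun z : E3 × E3 => 1 - gsCov (q * ‖z.1 - z.2‖) := by
    have := gsCov_cont.measurable
    fun_prop
  have hi := hf.pair_bdd hm (fun z => by
    have := gsCov_nonneg (q * ‖z.1 - z.2‖)
    have := gsCov_le (t := q * ‖z.1 - z.2‖) (by positivity)
    rw [abs_le]; constructor <;> linarith)
  set A := ∫ z : E3 × E3, (1 - gsCov (q * ‖z.1 - z.2‖)) * (f z.1 * f z.2 / ‖z.1 - z.2‖)
      ∂(volume.prod volume) with hA
  have hfi : Integrable (fun z : E3 × E3 => |f z.1| * |f z.2|) (volume.prod volume) :=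
    hf.integrable.abs.mul_prod hf.integrable.abs
  set N := ∫ z : E3 × E3, |f z.1| * |f z.2| ∂(volume.prod volume) with hN
  have hN0 : 0 ≤ N := integral_nonneg fun z => by positivity
  have key : ∀ ε, 0 < ε → ε ≤ 1 → 0 ≤ A / (3 * q) + ε * N := by
    intro ε h0 h1
    obtain ⟨hs, hs0⟩ := gs_shell_pos hf hq h1
    set c := 2 * ε + ε^2 with hc
    have hc0 : 0 < c := by positivity
    have hpi := Real.pi_pos
    have : ∫ z : E3 × E3, f z.1 * f z.2 * gsSh q ε (z.1 - z.2) ∂(volume.prod volume) ≤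
        ∫ z : E3 × E3, (Real.pi * c / (3 * q) * ((1 - gsCov (q * ‖z.1 - z.2‖)) * (f z.1 * f z.2 / ‖z.1 - z.2‖))
          + Real.pi * c * ε * (|f z.1| * |f z.2|)) ∂(volume.prod volume) := by
      refine integral_mono_ae hs ((hi.const_mul _).add (hfi.const_mul _)) ?_
      filter_upwards [gs_offdiag] with z hz
      have hz' : 0 < ‖z.1 - z.2‖ := norm_pos_iff.2 (sub_ne_zero.2 hz)
      have hE := gs_shell_est (q := q) h0 (z.1 - z.2)
      rw [gs_W (by positivity)] at hE
      set r := ‖z.1 - z.2‖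
      set Sh := gsSh q ε (z.1 - z.2)
      have e1 : f z.1 * f z.2 * Sh = f z.1 * f z.2 * (Real.pi * c * ((1 - gsCov (q * r)) / (3 * (q * r))))
        + f z.1 * f z.2 * (Sh - Real.pi * c * ((1 - gsCov (q * r)) / (3 * (q * r)))) := by ring
      have e2 : f z.1 * f z.2 * (Sh - Real.pi * c * ((1 - gsCov (q * r)) / (3 * (q * r)))) ≤
          (|f z.1| * |f z.2|) * (Real.pi * c * ε) := by
        refine (le_abs_self _).trans ?_
        rw [abs_mul, abs_mul]
        gcongr
      rw [e1]
      refine add_le_add (le_of_eq ?_) (e2.trans (le_of_eq (by ring)))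
      field_simp
    rw [integral_add (hi.const_mul _) (hfi.const_mul _), integral_const_mul, integral_const_mul] at this
    have h2 : 0 ≤ Real.pi * c * (A / (3 * q) + ε * N) := by
      calc 0 ≤ _ := hs0
        _ ≤ _ := this
        _ = _ := by rw [← hA, ← hN]; ring
    exact nonneg_of_mul_nonneg_right h2 (by positivity)
  have h3 : 0 ≤ A / (3 * q) := by
    by_contra hneg
    push Not at hneg
    have h4 := key (min 1 (-(A / (3*q)) / (2 * (N + 1)))) (by
      refine lt_min one_pos (div_pos (by linarith) (by linarith))) (min_le_left _ _)
    have h5 : min 1 (-(A / (3*q)) / (2 * (N + 1))) * N ≤ (-(A / (3*q)) / (2 * (N + 1))) * (N + 1) := by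
      gcongr
      · exact div_nonneg (by linarith) (by linarith)
      · exact min_le_right _ _
      · linarith
    have h6 : (-(A / (3*q)) / (2 * (N + 1))) * (N + 1) = -(A / (3*q)) / 2 := by
      field_simp
    linarith
  have : A = A / (3 * q) * (3 * q) := by field_simp
  rw [this]; positivity

instance gsStar : ContinuousStar (E3 →L[ℝ] E3) :=
  ⟨(ContinuousLinearMap.adjoint (𝕜 := ℝ) (E := E3) (F := E3)).continuous⟩

/-- The orthogonal group of `E3`. -/
abbrev GsO : Type := unitary (E3 →L[ℝ] E3)

lemma gs_compact : CompactSpace GsO := by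
  have hc : IsCompact ((unitary (E3 →L[ℝ] E3) : Set (E3 →L[ℝ] E3))) := by
    refine Metric.isCompact_of_isClosed_isBounded ?_ ?_
    · have : (unitary (E3 →L[ℝ] E3) : Set (E3 →L[ℝ] E3)) =
        {u | star u * u = 1} ∩ {u | u * star u = 1} := by
        ext u; exact Unitary.mem_iff
      rw [this]
      exact (isClosed_eq (by fun_prop) (by fun_prop)).inter (isClosed_eq (by fun_prop) (by fun_prop))
    · rw [isBounded_iff_forall_norm_le]
      refine ⟨1, fun u hu => ?_⟩
      exact CStarRing.norm_of_mem_unitary hu |>.le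
  exact isCompact_iff_compactSpace.1 hc

instance gsOMeas : MeasurableSpace GsO := borel GsO
instance gsOBorel : BorelSpace GsO := ⟨rfl⟩

instance gsOSec : SecondCountableTopology GsO :=
  TopologicalSpace.Subtype.secondCountableTopology _

lemma gs_haar : ∃ μ : Measure GsO, IsProbabilityMeasure μ ∧ μ.IsMulLeftInvariant := by
  have := gs_compact
  refine ⟨Measure.haarMeasure ⊤, ⟨?_⟩, inferInstance⟩
  have := Measure.haarMeasure_self (G := GsO) (K₀ := ⊤)
  simpa using this

/-- The inverse action. -/
def gsAct (U : GsO) (x : E3) : E3 := (star (U : E3 →L[ℝ] E3)) x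

lemma gsAct_cont : Continuous fun z : GsO × E3 => gsAct z.1 z.2 := by
  unfold gsAct; fun_prop

lemma gsAct_cont' {X : Type*} [TopologicalSpace X] {a : X → GsO} {b : X → E3} (ha : Continuous a)
    (hb : Continuous b) : Continuous fun x => gsAct (a x) (b x) := by
  have h : Continuous fun x => star (a x : E3 →L[ℝ] E3) :=
    continuous_star.comp (continuous_subtype_val.comp ha)
  exact h.clm_apply hb

lemma gsAct_norm (U : GsO) (x : E3) : ‖gsAct U x‖ = ‖x‖ :=
  (Unitary.linearIsometryEquiv (star U)).norm_map x

lemma gsAct_iso (U : GsO) : ∃ A : E3 ≃ₗᵢ[ℝ] E3, ∀ x, A x = gsAct U x :=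
  ⟨Unitary.linearIsometryEquiv (star U), fun _ => rfl⟩

lemma gsAct_trans (x y : E3) (h : ‖x‖ = ‖y‖) : ∃ V : GsO, ∀ U : GsO, gsAct (V * U) x = gsAct U y := by
  obtain ⟨A, hA⟩ := gs_rot y x h.symm
  refine ⟨Unitary.linearIsometryEquiv.symm A, fun U => ?_⟩
  have h1 : (Unitary.linearIsometryEquiv.symm A : E3 →L[ℝ] E3) y = x := hA
  unfold gsAct
  rw [Submonoid.coe_mul, star_mul, mul_apply_eq_comp]
  congr 1
  rw [← h1, ← mul_apply_eq_comp, Unitary.coe_star_mul_self]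
  rfl

lemma gs_kern_abs {G : Type} [MeasurableSpace G] (μ : Measure G) [IsProbabilityMeasure μ]
    {R : ℝ} {f : E3 → ℝ} (hf : GsNice R f) {a : G → E3 → ℝ} {b : G → ℝ}
    (a0 : ∀ U x, 0 ≤ a U x) (b0 : ∀ U, 0 ≤ b U)
    (m1 : Measurable fun w : G × (E3 × E3) => gsCov (a w.1 (w.2.1 - w.2.2)))
    (m2 : Measurable fun w : G × (E3 × E3) => gsCov (b w.1 * ‖w.2.1 - w.2.2‖))
    (key : ∀ x : E3, ∫ U, gsCov (a U x) ∂μ = ∫ U, gsCov (b U * ‖x‖) ∂μ) :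
    ∃ U, ∫ z : E3 × E3, gsCov (a U (z.1 - z.2)) * (f z.1 * f z.2 / ‖z.1 - z.2‖)
      ∂(volume.prod volume) ≤ gsJ f := by
  have hone : Integrable (fun w : G × (E3 × E3) => (1:ℝ) * (f w.2.1 * f w.2.2 / ‖w.2.1 - w.2.2‖))
      (μ.prod (volume.prod volume)) := (integrable_const (1:ℝ)).mul_prod hf.pair
  have hint : ∀ m : G × (E3 × E3) → ℝ, Measurable m → (∀ w, |m w| ≤ 1) → Integrable
      (fun w : G × (E3 × E3) => m w * (f w.2.1 * f w.2.2 / ‖w.2.1 - w.2.2‖))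
      (μ.prod (volume.prod volume)) := by
    intro m hm hb
    simp only [one_mul] at hone
    exact hone.bdd_mul hm.aestronglyMeasurable (Eventually.of_forall hb)
  have hbd : ∀ t : ℝ, 0 ≤ t → |gsCov t| ≤ 1 := fun t ht => by
    rw [abs_of_nonneg (gsCov_nonneg t)]; exact gsCov_le ht
  have i1 := hint _ m1 (fun w => hbd _ (a0 _ _))
  have i2 := hint _ m2 (fun w => hbd _ (mul_nonneg (b0 _) (norm_nonneg _)))
  have hle : ∫ U, ∫ z : E3 × E3, gsCov (a U (z.1 - z.2)) * (f z.1 * f z.2 / ‖z.1 - z.2‖)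
      ∂(volume.prod volume) ∂μ ≤ gsJ f := by
    have s1 := integral_integral_swap (f := fun (U : G) (z : E3 × E3) =>
      gsCov (a U (z.1 - z.2)) * (f z.1 * f z.2 / ‖z.1 - z.2‖)) i1
    have s2 := integral_integral_swap (f := fun (U : G) (z : E3 × E3) =>
      gsCov (b U * ‖z.1 - z.2‖) * (f z.1 * f z.2 / ‖z.1 - z.2‖)) i2
    rw [s1]
    simp only [integral_mul_const] at s2 ⊢
    simp only [key]
    rw [← s2]
    have : gsJ f = ∫ _ : G, gsJ f ∂μ := by simp
    rw [this]
    refine integral_mono i2.integral_prod_left (integrable_const _) fun U => ?_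
    have hw := gs_w_pos hf (b0 U)
    have hb := hf.pair_bdd (m := fun z => gsCov (b U * ‖z.1 - z.2‖))
      (m2.comp (measurable_const.prodMk measurable_id)) (fun w => hbd _ (mul_nonneg (b0 _) (norm_nonneg _)))
    simp only [sub_mul, one_mul] at hw
    rw [integral_sub hf.pair hb] at hw
    exact sub_nonneg.1 hw
  obtain ⟨U, hU⟩ := exists_le_integral i1.integral_prod_left
  exact ⟨U, hU.trans hle⟩

lemma gs_kern {R : ℝ} {f : E3 → ℝ} (hf : GsNice R f) {p : E3 → ℝ} (pc : Continuous p)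
    (p0 : ∀ z, 0 ≤ p z) (ph : ∀ t z, 0 ≤ t → p (t • z) = t * p z) :
    ∃ A : E3 ≃ₗᵢ[ℝ] E3, ∫ z : E3 × E3, gsCov (p (A (z.1 - z.2))) * (f z.1 * f z.2 / ‖z.1 - z.2‖)
      ∂(volume.prod volume) ≤ gsJ f := by
  have := gs_compact
  obtain ⟨μ, hμ, hinv⟩ := gs_haar
  set e : E3 := EuclideanSpace.single 0 1 with he
  have hen : ‖e‖ = 1 := by simp [he]
  have hcc := gsCov_cont
  have c1 : Continuous fun w : GsO × (E3 × E3) => gsAct w.1 (w.2.1 - w.2.2) :=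
    gsAct_cont' continuous_fst
      ((continuous_fst.comp continuous_snd).sub (continuous_snd.comp continuous_snd))
  have c2 : Continuous fun w : GsO × (E3 × E3) => gsAct w.1 e :=
    gsAct_cont' continuous_fst continuous_const
  have m1 : Measurable fun w : GsO × (E3 × E3) => gsCov (p (gsAct w.1 (w.2.1 - w.2.2))) :=
    (hcc.comp (pc.comp c1)).measurable
  have m2 : Measurable fun w : GsO × (E3 × E3) => gsCov (p (gsAct w.1 e) * ‖w.2.1 - w.2.2‖) :=
    (hcc.comp ((pc.comp c2).mul ((continuous_fst.comp continuous_snd).sub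
      (continuous_snd.comp continuous_snd)).norm)).measurable
  have key : ∀ x : E3, ∫ U, gsCov (p (gsAct U x)) ∂μ = ∫ U, gsCov (p (gsAct U e) * ‖x‖) ∂μ := by
    intro x
    obtain ⟨V, hV⟩ := gsAct_trans x (‖x‖ • e) (by simp [norm_smul, hen])
    rw [← integral_mul_left_eq_self _ V]
    congr 1; ext U
    rw [hV]
    have : gsAct U (‖x‖ • e) = ‖x‖ • gsAct U e := by unfold gsAct; rw [map_smul]
    rw [this, ph _ _ (norm_nonneg _), mul_comm]
  obtain ⟨U, hU⟩ := gs_kern_abs μ hf (a := fun U x => p (gsAct U x)) (b := fun U => p (gsAct U e))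
    (fun _ _ => p0 _) (fun _ => p0 _) m1 m2 key
  obtain ⟨A, hA⟩ := gsAct_iso U
  refine ⟨A, ?_⟩
  simp only [hA]
  exact hU

lemma gs_perCand_sub (A : E3 ≃ₗᵢ[ℝ] E3) (Ω : Set E3) : perCand (A ⁻¹' Ω) ⊆ perCand Ω := by
  rintro _ ⟨φ, h1, h2, h3, rfl⟩
  refine ⟨fun y => A (φ (A.symm y)), ?_, ?_, ?_, ?_⟩
  · exact A.contDiff.comp (h1.comp A.symm.contDiff)
  · have := (h2.comp_homeomorph A.symm.toHomeomorph).comp_left (g := A) (map_zero A)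
    exact this
  · intro x; rw [A.norm_map]; exact h3 _
  · have hd : ∀ x, divg (fun y => A (φ (A.symm y))) (A x) = divg φ x := by
      intro x
      have hφ : HasFDerivAt φ (fderiv ℝ φ x) (A.symm (A x)) := by
        rw [A.symm_apply_apply]
        exact (h1.differentiable (by norm_num) x).hasFDerivAt
      have h4 : HasFDerivAt (fun y => A (φ (A.symm y)))
          ((A : E3 →L[ℝ] E3).comp ((fderiv ℝ φ x).comp (A.symm : E3 →L[ℝ] E3))) (A x) :=
        ((A : E3 →L[ℝ] E3).hasFDerivAt).comp (A x)
          (hφ.comp (A x) ((A.symm : E3 →L[ℝ] E3).hasFDerivAt))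
      unfold divg
      rw [h4.fderiv]
      exact LinearMap.trace_conj' (fderiv ℝ φ x : E3 →ₗ[ℝ] E3) A.toLinearEquiv
    refine Eq.trans ?_ (A.measurePreserving.setIntegral_preimage_emb
      A.toHomeomorph.measurableEmbedding _ Ω)
    simp only [hd]

lemma gs_perCand_eq (A : E3 ≃ₗᵢ[ℝ] E3) (Ω : Set E3) : perCand (A ⁻¹' Ω) = perCand Ω := by
  refine Subset.antisymm (gs_perCand_sub A Ω) ?_
  have h := gs_perCand_sub A.symm (A ⁻¹' Ω)
  have : (A.symm ⁻¹' (A ⁻¹' Ω)) = Ω := by ext x; simp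
  rwa [this] at h

lemma gs_wlog {R ρ : ℝ} (h0 : 0 ≤ ρ) (h1 : ρ ≤ 1) {Ω : Set E3} (hm : MeasurableSet Ω)
    (hs : Ω ⊆ ball 0 R) (hp : HasFinPer Ω) {p : E3 → ℝ} (pc : Continuous p)
    (p0 : ∀ z, 0 ≤ p z) (ph : ∀ t z, 0 ≤ t → p (t • z) = t * p z) :
    ∃ Ω' : Set E3, MeasurableSet Ω' ∧ Ω' ⊆ ball 0 R ∧ HasFinPer Ω' ∧ vol Ω' = vol Ω ∧
      ldEnergy (ball 0 R) ρ Ω' = ldEnergy (ball 0 R) ρ Ω ∧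
      ∫ z : E3 × E3, gsCov (p (z.1 - z.2)) * (gsf (ball 0 R) ρ Ω' z.1 * gsf (ball 0 R) ρ Ω' z.2
        / ‖z.1 - z.2‖) ∂(volume.prod volume) ≤ gsJ (gsf (ball 0 R) ρ Ω') := by
  have hf := gsf_nice measurableSet_ball hm hs Subset.rfl h0 h1
  obtain ⟨A, hA⟩ := gs_kern hf pc p0 ph
  set B := A.symm with hB
  have hm' : MeasurableSet (B ⁻¹' Ω) := B.continuous.measurable hm
  have hs' : B ⁻¹' Ω ⊆ ball 0 R := fun x hx => by
    have := hs hx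
    rwa [mem_ball_zero_iff, B.norm_map, ← mem_ball_zero_iff] at this
  have hf' := gsf_nice measurableSet_ball hm' hs' Subset.rfl h0 h1
  have hff : ∀ x, gsf (ball 0 R) ρ (B ⁻¹' Ω) (A x) = gsf (ball 0 R) ρ Ω x := by
    intro x
    have e1 : (B ⁻¹' Ω).indicator (fun _ => (1:ℝ)) (A x) = Ω.indicator (fun _ => (1:ℝ)) x := by
      have : A x ∈ B ⁻¹' Ω ↔ x ∈ Ω := by simp [hB]
      by_cases h : x ∈ Ω
      · rw [indicator_of_mem h, indicator_of_mem (this.2 h)]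
      · rw [indicator_of_notMem h, indicator_of_notMem (fun hh => h (this.1 hh))]
    have e2 : (ball (0:E3) R).indicator (fun _ => (1:ℝ)) (A x) = (ball (0:E3) R).indicator (fun _ => (1:ℝ)) x := by
      have : A x ∈ ball (0:E3) R ↔ x ∈ ball (0:E3) R := by simp
      by_cases h : x ∈ ball (0:E3) R
      · rw [indicator_of_mem h, indicator_of_mem (this.2 h)]
      · rw [indicator_of_notMem h, indicator_of_notMem (fun hh => h (this.1 hh))]
    unfold gsf
    rw [e1, e2]
  have hmp : MeasurePreserving (Prod.map A A) ((volume : Measure E3).prod (volume : Measure E3))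
      ((volume : Measure E3).prod (volume : Measure E3)) :=
    A.measurePreserving.prod A.measurePreserving
  have hemb : MeasurableEmbedding (Prod.map A A) :=
    (A.toHomeomorph.prodCongr A.toHomeomorph).measurableEmbedding
  have hJ : gsJ (gsf (ball 0 R) ρ (B ⁻¹' Ω)) = gsJ (gsf (ball 0 R) ρ Ω) := by
    unfold gsJ
    rw [← hmp.integral_comp hemb]
    congr 1; ext z
    simp only [Prod.map_fst, Prod.map_snd, hff, ← map_sub, A.norm_map]
  refine ⟨B ⁻¹' Ω, hm', hs', ?_, ?_, ?_, ?_⟩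
  · unfold HasFinPer; rw [gs_perCand_eq]; exact hp
  · unfold vol; rw [B.measurePreserving.measure_preimage hm.nullMeasurableSet]
  · rw [gs_ldEnergy hf, gs_ldEnergy hf', hJ]
    unfold per; rw [gs_perCand_eq]
  · rw [hJ]
    refine le_trans (le_of_eq ?_) hA
    rw [← hmp.integral_comp hemb]
    congr 1; ext z
    simp only [Prod.map_fst, Prod.map_snd, hff, ← map_sub, A.norm_map]

/-- Indicator function of a set. -/
def gsI (K : Set E3) (x : E3) : ℝ := K.indicator (fun _ => (1:ℝ)) x

lemma gsI_mem {K : Set E3} {x : E3} (h : x ∈ K) : gsI K x = 1 := indicator_of_mem h _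
lemma gsI_not {K : Set E3} {x : E3} (h : x ∉ K) : gsI K x = 0 := indicator_of_notMem h _

lemma gsI_nonneg (K : Set E3) (x : E3) : 0 ≤ gsI K x := by
  by_cases h : x ∈ K
  · rw [gsI_mem h]; norm_num
  · rw [gsI_not h]

lemma gsI_le (K : Set E3) (x : E3) : gsI K x ≤ 1 := by
  by_cases h : x ∈ K
  · rw [gsI_mem h]
  · rw [gsI_not h]; norm_num

lemma gsI_abs (K : Set E3) (x : E3) : |gsI K x| ≤ 1 := by
  rw [abs_of_nonneg (gsI_nonneg K x)]; exact gsI_le K x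

lemma gsI_abs2 (K : Set E3) (x y : E3) : |gsI K x * gsI K y| ≤ 1 := by
  rw [abs_mul]; exact mul_le_one₀ (gsI_abs K x) (abs_nonneg _) (gsI_abs K y)

lemma gsI_meas {K : Set E3} (hK : MeasurableSet K) : Measurable (gsI K) :=
  measurable_const.indicator hK

lemma gsI_contAt {K : Set E3} {x : E3} (h : x ∉ frontier K) : ContinuousAt (gsI K) x := by
  rw [← mem_compl_iff, compl_frontier_eq_union_interior] at h
  rcases h with h | h
  · have : gsI K =ᶠ[𝓝 x] fun _ => 1 := by
      filter_upwards [mem_interior_iff_mem_nhds.1 h] with y hy using gsI_mem hy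
    exact continuousAt_const.congr this.symm
  · have : gsI K =ᶠ[𝓝 x] fun _ => 0 := by
      filter_upwards [mem_interior_iff_mem_nhds.1 h] with y hy using gsI_not hy
    exact continuousAt_const.congr this.symm

lemma gs_front_ae {K : Set E3} (hc : Convex ℝ K) (τ : E3) : ∀ᵐ x : E3, x - τ ∉ frontier K := by
  have h := hc.addHaar_frontier (volume : Measure E3)
  have h2 : volume ((fun x => x - τ) ⁻¹' frontier K) = 0 := by
    rw [(measurePreserving_sub_right volume τ).measure_preimage
      isClosed_frontier.measurableSet.nullMeasurableSet, h]
  rw [ae_iff]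
  simp only [not_not]
  exact h2

lemma gs_cont1 {K : Set E3} (hK : MeasurableSet K) (hc : Convex ℝ K) {ν : Measure E3}
    (hν : ν ≪ volume) {g : E3 → ℝ} (hg : Integrable g ν) :
    Continuous fun τ => ∫ x, gsI K (x - τ) * g x ∂ν := by
  have hm := gsI_meas hK
  rw [continuous_iff_continuousAt]
  intro τ
  refine continuousAt_of_dominated (bound := fun x => ‖g x‖) (Eventually.of_forall fun s => ?_)
    (Eventually.of_forall fun s => Eventually.of_forall fun x => ?_) hg.norm ?_
  · exact (hm.comp (measurable_id.sub_const s)).aestronglyMeasurable.mul hg.1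
  · rw [norm_mul]
    exact mul_le_of_le_one_left (norm_nonneg _) (gsI_abs _ _)
  · filter_upwards [hν (gs_front_ae hc τ)] with x hx
    have h1 : ContinuousAt (fun s => gsI K (x - s)) τ :=
      ContinuousAt.comp (f := fun s => x - s) (gsI_contAt hx) (by fun_prop)
    exact h1.mul continuousAt_const

lemma gs_cont2 {K : Set E3} (hK : MeasurableSet K) (hc : Convex ℝ K)
    {g : E3 × E3 → ℝ} (hg : Integrable g (volume.prod volume)) :
    Continuous fun τ => ∫ z : E3 × E3, gsI K (z.1 - τ) * gsI K (z.2 - τ) * g z ∂(volume.prod volume) := by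
  have hm := gsI_meas hK
  rw [continuous_iff_continuousAt]
  intro τ
  refine continuousAt_of_dominated (bound := fun x => ‖g x‖) (Eventually.of_forall fun s => ?_)
    (Eventually.of_forall fun s => Eventually.of_forall fun x => ?_) hg.norm ?_
  · exact ((hm.comp (measurable_fst.sub_const s)).mul
      (hm.comp (measurable_snd.sub_const s))).aestronglyMeasurable.mul hg.1
  · rw [norm_mul]
    exact mul_le_of_le_one_left (norm_nonneg _) (gsI_abs2 _ _ _)
  · have a1 : ∀ᵐ z : E3 × E3 ∂(volume.prod volume), z.1 - τ ∉ frontier K :=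
      Measure.quasiMeasurePreserving_fst.ae (gs_front_ae hc τ)
    have a2 : ∀ᵐ z : E3 × E3 ∂(volume.prod volume), z.2 - τ ∉ frontier K :=
      Measure.quasiMeasurePreserving_snd.ae (gs_front_ae hc τ)
    filter_upwards [a1, a2] with z h1 h2
    have h1 : ContinuousAt (fun s => gsI K (z.1 - s)) τ :=
      ContinuousAt.comp (f := fun s => z.1 - s) (gsI_contAt h1) (by fun_prop)
    have h2 : ContinuousAt (fun s => gsI K (z.2 - s)) τ :=
      ContinuousAt.comp (f := fun s => z.2 - s) (gsI_contAt h2) (by fun_prop)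
    exact (h1.mul h2).mul continuousAt_const

/-- The localized pair energy. -/
def gsP (K : Set E3) (f : E3 → ℝ) (τ : E3) : ℝ :=
  ∫ z : E3 × E3, gsI K (z.1 - τ) * gsI K (z.2 - τ) * (f z.1 * f z.2 / ‖z.1 - z.2‖) ∂(volume.prod volume)

/-- The localized mass. -/
def gsM (K Ω : Set E3) (τ : E3) : ℝ := ∫ x in Ω, gsI K (x - τ)

lemma gs_loc_nice {K : Set E3} (hK : MeasurableSet K) {d R : ℝ} (hKd : K ⊆ ball 0 d) {f : E3 → ℝ}
    (hf : GsNice R f) (τ : E3) : GsNice d (fun u => gsI K u * f (u + τ)) := by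
  refine ⟨(gsI_meas hK).mul (hf.meas.comp (measurable_id.add_const τ)), fun x => ?_⟩
  by_cases h : x ∈ K
  · rw [indicator_of_mem (hKd h), gsI_mem h, one_mul]; exact hf.le_one _
  · rw [gsI_not h, zero_mul, abs_zero]
    exact indicator_nonneg (by simp) _

lemma gsP_eq {K : Set E3} (f : E3 → ℝ) (τ : E3) : gsP K f τ = gsJ (fun u => gsI K u * f (u + τ)) := by
  have hmp : MeasurePreserving (Prod.map (fun x : E3 => x + τ) (fun x : E3 => x + τ))
      ((volume : Measure E3).prod (volume : Measure E3)) ((volume : Measure E3).prod (volume : Measure E3)) :=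
    (measurePreserving_add_right volume τ).prod (measurePreserving_add_right volume τ)
  have hemb : MeasurableEmbedding (Prod.map (fun x : E3 => x + τ) (fun x : E3 => x + τ)) :=
    ((Homeomorph.addRight τ).prodCongr (Homeomorph.addRight τ)).measurableEmbedding
  unfold gsP gsJ
  rw [← hmp.integral_comp hemb]
  congr 1; ext z
  simp only [Prod.map_fst, Prod.map_snd, add_sub_cancel_right, add_sub_add_right_eq_sub]
  ring

lemma gsP_le {K : Set E3} (hK : MeasurableSet K) {d R : ℝ} (hKd : K ⊆ ball 0 d) {f : E3 → ℝ}
    (hf : GsNice R f) (τ : E3) : |gsP K f τ| ≤ gsJmax d := by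
  rw [gsP_eq]; exact (gs_loc_nice hK hKd hf τ).J_le

/-- The localized set. -/
def gsL (K Ω : Set E3) (τ : E3) : Set E3 := {u | u ∈ K ∧ u + τ ∈ Ω}

lemma gsL_meas {K Ω : Set E3} (hK : MeasurableSet K) (hΩ : MeasurableSet Ω) (τ : E3) :
    MeasurableSet (gsL K Ω τ) := hK.inter (measurable_id.add_const τ hΩ)

lemma gs_loc_int {K Ω : Set E3} (hK : MeasurableSet K) (hΩ : MeasurableSet Ω) (τ : E3) (g : E3 → ℝ) :
    ∫ u in gsL K Ω τ, g u = ∫ x in Ω, gsI K (x - τ) * g (x - τ) := by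
  rw [← integral_indicator (gsL_meas hK hΩ τ), ← integral_indicator hΩ,
    ← integral_sub_right_eq_self _ τ]
  congr 1; ext x
  have hiff : x - τ ∈ gsL K Ω τ ↔ x - τ ∈ K ∧ x ∈ Ω := by
    unfold gsL; rw [mem_ofPred_eq, sub_add_cancel]
  by_cases h : x ∈ Ω
  · rw [indicator_of_mem h]
    by_cases h2 : x - τ ∈ K
    · rw [indicator_of_mem (hiff.2 ⟨h2, h⟩), gsI_mem h2, one_mul]
    · rw [indicator_of_notMem (fun hh => h2 (hiff.1 hh).1), gsI_not h2, zero_mul]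
  · rw [indicator_of_notMem h, indicator_of_notMem (fun hh => h (hiff.1 hh).2)]

lemma gsM_eq {K Ω : Set E3} (hK : MeasurableSet K) (hΩ : MeasurableSet Ω) (τ : E3) :
    gsM K Ω τ = vol (gsL K Ω τ) := by
  have := gs_loc_int hK hΩ τ (fun _ => 1)
  simp only [mul_one] at this
  unfold gsM
  rw [← this]
  simp [vol, Measure.real]

lemma gsM_bd {K Ω : Set E3} (hK : MeasurableSet K) (hΩ : MeasurableSet Ω) (hKv : volume K ≠ ⊤) (τ : E3) :
    0 ≤ gsM K Ω τ ∧ gsM K Ω τ ≤ vol K := by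
  rw [gsM_eq hK hΩ]
  exact ⟨ENNReal.toReal_nonneg, ENNReal.toReal_mono hKv (measure_mono fun x hx => hx.1)⟩

lemma gs_loc_f {K Ω Λ : Set E3} {ρ : ℝ} {τ : E3} (h : ∀ u ∈ K, u + τ ∈ Λ) :
    gsf K ρ (gsL K Ω τ) = fun u => gsI K u * gsf Λ ρ Ω (u + τ) := by
  ext u
  unfold gsf
  by_cases hu : u ∈ K
  · rw [gsI_mem hu, indicator_of_mem hu, indicator_of_mem (h u hu), one_mul]
    congr 1
    by_cases h2 : u + τ ∈ Ω
    · rw [indicator_of_mem h2, indicator_of_mem (show u ∈ gsL K Ω τ from ⟨hu, h2⟩)]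
    · rw [indicator_of_notMem h2, indicator_of_notMem (fun hh : u ∈ gsL K Ω τ => h2 hh.2)]
  · rw [gsI_not hu, indicator_of_notMem hu, indicator_of_notMem (fun hh : u ∈ gsL K Ω τ => hu hh.1)]
    ring

lemma gs_FF_bdd {K : Set E3} (hK : MeasurableSet K) {d ρ : ℝ} (hKd : K ⊆ ball 0 d) (h0 : 0 ≤ ρ)
    (h1 : ρ ≤ 1) : BddBelow {t : ℝ | ∃ Ω : Set E3, MeasurableSet Ω ∧ Ω ⊆ K ∧ HasFinPer Ω ∧
      t = ldEnergy K ρ Ω - muStar * vol Ω} := by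
  refine ⟨-(1/2) * gsJmax d - |muStar| * vol K, ?_⟩
  rintro _ ⟨Ω, hm, hs, hp, rfl⟩
  have hf := gsf_nice hK hm hs hKd h0 h1
  rw [gs_ldEnergy hf]
  have a1 := (abs_le.1 hf.J_le).1
  have a2 := gs_per_nonneg hp
  have hKv : volume K ≠ ⊤ := (measure_mono hKd).trans_lt measure_ball_lt_top |>.ne
  have a3 : vol Ω ≤ vol K := ENNReal.toReal_mono hKv (measure_mono hs)
  have a4 : 0 ≤ vol Ω := ENNReal.toReal_nonneg
  have a5 : muStar * vol Ω ≤ |muStar| * vol K :=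
    mul_le_mul (le_abs_self _) a3 a4 (abs_nonneg _)
  linarith

/-- The localized energy without the perimeter. -/
def gsE (K Ω : Set E3) (f : E3 → ℝ) (τ : E3) : ℝ := 1/2 * gsP K f τ - muStar * gsM K Ω τ

/-- The localized perimeter test. -/
def gsG (K Ω : Set E3) (φ : E3 → E3) (τ : E3) : ℝ := ∫ x in Ω, gsI K (x - τ) * divg φ x

lemma gs_pick {K Ω : Set E3} (hK : MeasurableSet K) {d R ρ : ℝ} (hKd : K ⊆ ball 0 d) (h0 : 0 ≤ ρ)
    (h1 : ρ ≤ 1) (hΩ : MeasurableSet Ω) {τ : E3} (hτ : ‖τ‖ ≤ R - d) {δ : ℝ} (hδ : 0 < δ) :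
    ∃ φ, GsAdm φ ∧ FF K ρ - δ < gsG K Ω φ τ + gsE K Ω (gsf (ball 0 R) ρ Ω) τ := by
  have hin : ∀ u ∈ K, u + τ ∈ ball (0:E3) R := fun u hu => by
    have := hKd hu
    rw [mem_ball_zero_iff] at *
    have := norm_add_le u τ
    linarith
  have hm := gsL_meas hK hΩ τ
  have hsub : gsL K Ω τ ⊆ K := fun x hx => hx.1
  have hf := gsf_nice hK hm hsub hKd h0 h1
  have hE : ldEnergy K ρ (gsL K Ω τ) - muStar * vol (gsL K Ω τ) =
      per (gsL K Ω τ) + gsE K Ω (gsf (ball 0 R) ρ Ω) τ := by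
    rw [gs_ldEnergy hf, gs_loc_f hin, ← gsP_eq, ← gsM_eq hK hΩ]
    unfold gsE; ring
  have hex : ∃ a ∈ perCand (gsL K Ω τ), FF K ρ - δ - gsE K Ω (gsf (ball 0 R) ρ Ω) τ < a := by
    by_cases hp : HasFinPer (gsL K Ω τ)
    · refine exists_lt_of_lt_csSup ⟨0, gs_zero_mem _⟩ ?_
      have : FF K ρ ≤ ldEnergy K ρ (gsL K Ω τ) - muStar * vol (gsL K Ω τ) :=
        csInf_le (gs_FF_bdd hK hKd h0 h1) ⟨_, hm, hsub, hp, rfl⟩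
      rw [hE] at this
      unfold per at this
      linarith
    · exact (not_bddAbove_iff.1 hp) _
  obtain ⟨_, ⟨φ, f1, f2, f3, rfl⟩, ha⟩ := hex
  refine ⟨fun x => φ (x - τ), ⟨?_, ?_, fun x => f3 _⟩, ?_⟩
  · exact f1.comp (contDiff_id.sub contDiff_const)
  · exact f2.comp_homeomorph (Homeomorph.subRight τ)
  · have hd : ∀ x, divg (fun x => φ (x - τ)) x = divg φ (x - τ) := fun x => by
      unfold divg; rw [fderiv_comp_sub]
    rw [gs_loc_int hK hΩ] at ha
    unfold gsG
    simp only [hd]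
    linarith

lemma gs_cov_int {K : Set E3} (hK : MeasurableSet K) {p : E3 → ℝ}
    (cov : ∀ z, vol (K ∩ {u | u - z ∈ K}) = vol K * (max (1 - p z) 0)^3) (x y : E3) :
    ∫ τ, gsI K (x - τ) * gsI K (y - τ) = vol K * gsCov (p (x - y)) := by
  unfold gsCov
  rw [← cov]
  have hm : MeasurableSet (K ∩ {u | u - (x - y) ∈ K}) := hK.inter (measurable_id.sub_const _ hK)
  have h1 : ∀ τ, gsI K (x - τ) * gsI K (y - τ) =
      (K ∩ {u | u - (x - y) ∈ K}).indicator (fun _ => (1:ℝ)) (x - τ) := by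
    intro τ
    have hiff : x - τ ∈ (K ∩ {u | u - (x - y) ∈ K}) ↔ x - τ ∈ K ∧ y - τ ∈ K := by
      rw [mem_inter_iff, mem_ofPred_eq, show x - τ - (x - y) = y - τ by abel]
    by_cases a : x - τ ∈ K
    · by_cases b : y - τ ∈ K
      · rw [gsI_mem a, gsI_mem b, indicator_of_mem (hiff.2 ⟨a, b⟩), one_mul]
      · rw [gsI_not b, indicator_of_notMem (fun h => b (hiff.1 h).2), mul_zero]
    · rw [gsI_not a, indicator_of_notMem (fun h => a (hiff.1 h).1), zero_mul]
  simp only [h1]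
  rw [integral_sub_left_eq_self (fun t => (K ∩ {u | u - (x - y) ∈ K}).indicator (fun _ => (1:ℝ)) t),
    integral_indicator_const _ hm]
  simp [vol, Measure.real]

lemma gs_mem_T {K : Set E3} {d R : ℝ} (hKd : K ⊆ ball 0 d) {x τ : E3} (hx : ‖x‖ < R)
    (h : x - τ ∈ K) : τ ∈ closedBall (0:E3) (R + d) := by
  have h1 := hKd h
  rw [mem_ball_zero_iff] at h1
  rw [mem_closedBall_zero_iff]
  have h2 : ‖x - (x - τ)‖ ≤ ‖x‖ + ‖x - τ‖ := norm_sub_le _ _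
  rw [sub_sub_cancel] at h2
  linarith

lemma gs_int_P {K : Set E3} (hK : MeasurableSet K) {d R : ℝ} (hKd : K ⊆ ball 0 d) {f : E3 → ℝ}
    (hf : GsNice R f) {p : E3 → ℝ}
    (cov : ∀ z, vol (K ∩ {u | u - z ∈ K}) = vol K * (max (1 - p z) 0)^3) :
    ∫ τ in closedBall (0:E3) (R + d), gsP K f τ = vol K *
      ∫ z : E3 × E3, gsCov (p (z.1 - z.2)) * (f z.1 * f z.2 / ‖z.1 - z.2‖) ∂(volume.prod volume) := by
  set T := closedBall (0:E3) (R + d) with hT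
  have hm := gsI_meas hK
  have hfin : IsFiniteMeasure ((volume : Measure E3).restrict T) :=
    ⟨by rw [Measure.restrict_apply_univ]; exact measure_closedBall_lt_top⟩
  have hone : Integrable (fun w : E3 × (E3 × E3) => (1:ℝ) * (f w.2.1 * f w.2.2 / ‖w.2.1 - w.2.2‖))
      (((volume : Measure E3).restrict T).prod (volume.prod volume)) :=
    (integrable_const (1:ℝ)).mul_prod hf.pair
  simp only [one_mul] at hone
  have hmm : Measurable fun w : E3 × (E3 × E3) => gsI K (w.2.1 - w.1) * gsI K (w.2.2 - w.1) := by
    have a1 : Measurable fun w : E3 × (E3 × E3) => w.2.1 - w.1 := by fun_prop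
    have a2 : Measurable fun w : E3 × (E3 × E3) => w.2.2 - w.1 := by fun_prop
    exact (hm.comp a1).mul (hm.comp a2)
  have hint := hone.bdd_mul (c := 1) hmm.aestronglyMeasurable (Eventually.of_forall fun w => gsI_abs2 K _ _)
  unfold gsP
  rw [integral_integral_swap (f := fun (τ : E3) (z : E3 × E3) =>
    gsI K (z.1 - τ) * gsI K (z.2 - τ) * (f z.1 * f z.2 / ‖z.1 - z.2‖)) hint, ← integral_const_mul]
  congr 1; ext z
  rw [integral_mul_const, ← mul_assoc, ← gs_cov_int hK cov]
  by_cases hz : R ≤ ‖z.1‖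
  · rw [hf.zero hz]; simp
  · congr 1
    push Not at hz
    refine setIntegral_eq_integral_of_forall_compl_eq_zero fun τ hτ => ?_
    rw [gsI_not (fun h => hτ (gs_mem_T hKd hz h)), zero_mul]

lemma gs_int_M {K Ω : Set E3} (hK : MeasurableSet K) {d R : ℝ} (hKd : K ⊆ ball 0 d)
    (hΩ : MeasurableSet Ω) (hs : Ω ⊆ ball 0 R) :
    ∫ τ in closedBall (0:E3) (R + d), gsM K Ω τ = vol K * vol Ω := by
  set T := closedBall (0:E3) (R + d) with hT
  have hm := gsI_meas hK
  have hfin : IsFiniteMeasure ((volume : Measure E3).restrict T) :=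
    ⟨by rw [Measure.restrict_apply_univ]; exact measure_closedBall_lt_top⟩
  have hfin2 : IsFiniteMeasure ((volume : Measure E3).restrict Ω) :=
    ⟨by rw [Measure.restrict_apply_univ]; exact (measure_mono hs).trans_lt measure_ball_lt_top⟩
  have hmm : Measurable fun w : E3 × E3 => gsI K (w.2 - w.1) := by
    have a1 : Measurable fun w : E3 × E3 => w.2 - w.1 := by fun_prop
    exact hm.comp a1
  have hint : Integrable (fun w : E3 × E3 => gsI K (w.2 - w.1))
      (((volume : Measure E3).restrict T).prod ((volume : Measure E3).restrict Ω)) :=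
    (integrable_const (1:ℝ)).mono' hmm.aestronglyMeasurable (Eventually.of_forall fun w => gsI_abs K _)
  unfold gsM
  rw [integral_integral_swap (f := fun (τ : E3) (x : E3) => gsI K (x - τ)) hint]
  have : ∀ x ∈ Ω, ∫ τ in T, gsI K (x - τ) = vol K := by
    intro x hx
    have hx' := hs hx
    rw [mem_ball_zero_iff] at hx'
    rw [setIntegral_eq_integral_of_forall_compl_eq_zero (fun τ hτ => ?_),
      integral_sub_left_eq_self (gsI K)]
    · unfold gsI
      rw [integral_indicator_const _ hK]; simp [vol, Measure.real]
    · exact gsI_not (fun h => hτ (gs_mem_T hKd hx' h))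
  rw [setIntegral_congr_fun hΩ this]
  simp [vol, Measure.real, mul_comm]

lemma gs_cover {P : (E3 → E3) → E3 → Prop} {T : Set E3} (hT : IsCompact T)
    (h : ∀ τ ∈ T, ∃ φ, GsAdm φ ∧ P φ τ) (ho : ∀ φ, GsAdm φ → IsOpen {τ | P φ τ}) :
    ∃ (n : ℕ) (φ : Fin n → E3 → E3) (A : Fin n → Set E3), (∀ i, GsAdm (φ i)) ∧
      (∀ i, MeasurableSet (A i)) ∧ Pairwise (Function.onFun Disjoint A) ∧ (⋃ i, A i) = T ∧
      ∀ i, ∀ τ ∈ A i, P (φ i) τ := by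
  choose! F hF1 hF2 using h
  obtain ⟨t, ht⟩ := hT.elim_finite_subcover (fun i : T => {τ | P (F i) τ})
    (fun i => ho _ (hF1 i i.2)) (fun τ hτ => mem_iUnion.2 ⟨⟨τ, hτ⟩, hF2 τ hτ⟩)
  let e := t.equivFin.symm
  let B : Fin t.card → Set E3 := fun i => {τ | P (F (e i).1) τ} ∩ T
  have hB : ∀ i, MeasurableSet (B i) := fun i =>
    (ho _ (hF1 _ (e i).1.2)).measurableSet.inter hT.measurableSet
  refine ⟨t.card, fun i => F (e i).1, disjointed B, fun i => hF1 _ (e i).1.2, fun i => ?_,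
    disjoint_disjointed B, ?_, fun i τ hτ => (disjointed_subset B i hτ).1⟩
  · exact disjointedRec (fun _ _ ht => MeasurableSet.diff ht <| hB _) (hB i)
  · rw [iUnion_disjointed]
    refine Subset.antisymm (iUnion_subset fun i => inter_subset_right) fun τ hτ => ?_
    obtain ⟨i, hi, hi2⟩ := mem_iUnion₂.1 (ht hτ)
    refine mem_iUnion.2 ⟨e.symm ⟨i, hi⟩, ?_, hτ⟩
    simpa using hi2

lemma gs_main {K Ω : Set E3} {p : E3 → ℝ} (hK : GsTet K p) {C : ℝ} (hC : GsCut K C)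
    (hKp : 0 < vol K) {d R ρ : ℝ} (hKd : K ⊆ ball 0 d) (hd : 0 < d) (h0 : 0 ≤ ρ)
    (h1 : ρ ≤ 1) (hΩ : MeasurableSet Ω) (hs : Ω ⊆ ball 0 R) (hp : HasFinPer Ω)
    (hker : ∫ z : E3 × E3, gsCov (p (z.1 - z.2)) * (gsf (ball 0 R) ρ Ω z.1 * gsf (ball 0 R) ρ Ω z.2
        / ‖z.1 - z.2‖) ∂(volume.prod volume) ≤ gsJ (gsf (ball 0 R) ρ Ω)) :
    FF K ρ * vol (closedBall (0:E3) (R - d)) - (1/2 * gsJmax d + |muStar| * vol K) *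
        (vol (closedBall (0:E3) (R + d)) - vol (closedBall (0:E3) (R - d))) ≤
      vol K * (ldEnergy (ball 0 R) ρ Ω - muStar * vol Ω) + C * vol Ω := by
  have hKm := hK.opn.measurableSet
  have hKv : volume K ≠ ⊤ := (measure_mono hKd).trans_lt measure_ball_lt_top |>.ne
  have hΩv : volume Ω ≠ ⊤ := (measure_mono hs).trans_lt measure_ball_lt_top |>.ne
  have hf := gsf_nice measurableSet_ball hΩ hs Subset.rfl h0 h1
  set f := gsf (ball 0 R) ρ Ω with hfdef
  set T0 := closedBall (0:E3) (R - d) with hT0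
  set T := closedBall (0:E3) (R + d) with hT
  have hsub : T0 ⊆ T := closedBall_subset_closedBall (by linarith)
  have hT0v : volume T0 ≠ ⊤ := measure_closedBall_lt_top.ne
  have hTv : volume T ≠ ⊤ := measure_closedBall_lt_top.ne
  have hT0m : MeasurableSet T0 := measurableSet_closedBall
  have hTm : MeasurableSet T := measurableSet_closedBall
  have cP : Continuous (gsP K f) := gs_cont2 hKm hK.cvx hf.pair
  have hfin2 : IsFiniteMeasure ((volume : Measure E3).restrict Ω) :=
    ⟨by rw [Measure.restrict_apply_univ]; exact hΩv.lt_top⟩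
  have cM : Continuous (gsM K Ω) := by
    have := gs_cont1 hKm hK.cvx (ν := volume.restrict Ω) Measure.restrict_le_self.absolutelyContinuous
      (g := fun _ => 1) (integrable_const _)
    simp only [mul_one] at this
    exact this
  have cE : Continuous (gsE K Ω f) := (cP.const_mul _).sub (cM.const_mul _)
  have cG : ∀ φ, GsAdm φ → Continuous (gsG K Ω φ) := fun φ hφ =>
    gs_cont1 hKm hK.cvx (ν := volume.restrict Ω) Measure.restrict_le_self.absolutelyContinuous
      (divg_int hφ.smooth hφ.supp).integrableOn
  have iTC : ∀ g : E3 → ℝ, Continuous g → IntegrableOn g T := fun g hg =>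
    hg.continuousOn.integrableOn_compact (isCompact_closedBall _ _)
  have hET : ∫ τ in T, gsE K Ω f τ ≤ vol K * (1/2 * gsJ f - muStar * vol Ω) := by
    unfold gsE
    rw [integral_sub ((iTC _ cP).const_mul _) ((iTC _ cM).const_mul _), integral_const_mul,
      integral_const_mul, gs_int_P hKm hKd hf hK.cov, gs_int_M hKm hKd hΩ hs]
    have := mul_le_mul_of_nonneg_left hker hKp.le
    linarith
  have hElow : ∀ τ, -(1/2 * gsJmax d + |muStar| * vol K) ≤ gsE K Ω f τ := by
    intro τ
    have a1 := (abs_le.1 (gsP_le hKm hKd hf τ)).1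
    have a2 := gsM_bd hKm hΩ hKv τ
    have a5 : muStar * gsM K Ω τ ≤ |muStar| * vol K :=
      mul_le_mul (le_abs_self _) a2.2 a2.1 (abs_nonneg _)
    unfold gsE
    linarith
  have hout : -(1/2 * gsJmax d + |muStar| * vol K) * (vol T - vol T0) ≤ ∫ τ in T \ T0, gsE K Ω f τ := by
    have e : ∫ τ in T \ T0, -(1/2 * gsJmax d + |muStar| * vol K) =
        -(1/2 * gsJmax d + |muStar| * vol K) * (vol T - vol T0) := by
      rw [setIntegral_const, measureReal_sdiff hsub hT0m hTv, smul_eq_mul, mul_comm]; rfl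
    rw [← e]
    refine setIntegral_mono (integrableOn_const ?_) ((iTC _ cE).mono_set sdiff_subset) fun τ => hElow τ
    exact (measure_mono sdiff_subset).trans_lt hTv.lt_top |>.ne
  have hδ : ∀ δ, 0 < δ → (FF K ρ - δ) * vol T0 ≤ vol K * per Ω + C * vol Ω +
      ∫ τ in T0, gsE K Ω f τ := by
    intro δ hδ
    obtain ⟨n, φ, A, hφ, hA, hdj, hU, hPA⟩ := gs_cover
      (P := fun φ τ => FF K ρ - δ < gsG K Ω φ τ + gsE K Ω f τ) (T := T0) (isCompact_closedBall _ _)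
      (fun τ hτ => gs_pick hKm hKd h0 h1 hΩ (mem_closedBall_zero_iff.1 hτ) hδ)
      (fun φ hφ => isOpen_lt continuous_const ((cG φ hφ).add cE))
    have hAs : ∀ i, A i ⊆ T0 := fun i => by rw [← hU]; exact subset_iUnion A i
    have hAv : ∀ i, volume (A i) ≠ ⊤ := fun i => (measure_mono (hAs i)).trans_lt hT0v.lt_top |>.ne
    have hmain := gs_per_main hΩ hΩv hp hKm hKv hKp hC φ hφ A hA hAv hdj
    have iA : ∀ (i) (g : E3 → ℝ), Continuous g → IntegrableOn g (A i) := fun i g hg =>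
      (iTC g hg).mono_set ((hAs i).trans hsub)
    have hEs : ∫ τ in T0, gsE K Ω f τ = ∑ i, ∫ τ in A i, gsE K Ω f τ := by
      rw [← hU, integral_iUnion_fintype hA hdj (fun i => iA i _ cE)]
    have hvs : ∫ τ in T0, (FF K ρ - δ) = ∑ i, ∫ τ in A i, (FF K ρ - δ) := by
      rw [← hU, integral_iUnion_fintype hA hdj (fun i => iA i _ continuous_const)]
    have hle : ∑ i, ∫ τ in A i, (FF K ρ - δ) ≤
        ∑ i, ((∫ τ in A i, gsG K Ω (φ i) τ) + ∫ τ in A i, gsE K Ω f τ) := by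
      refine Finset.sum_le_sum fun i _ => ?_
      rw [← integral_add (iA i _ (cG _ (hφ i))) (iA i _ cE)]
      exact setIntegral_mono_on (iA i _ continuous_const)
        ((iA i _ (cG _ (hφ i))).add (iA i _ cE)) (hA i) fun τ hτ => (hPA i τ hτ).le
    rw [← hvs, Finset.sum_add_distrib, ← hEs, setIntegral_const, smul_eq_mul, mul_comm] at hle
    have hv : volume.real T0 = vol T0 := rfl
    rw [hv] at hle
    have : ∑ i, ∫ τ in A i, gsG K Ω (φ i) τ ≤ vol K * per Ω + C * vol Ω := hmain
    linarith
  have hsplit : ∫ τ in T, gsE K Ω f τ = (∫ τ in T0, gsE K Ω f τ) + ∫ τ in T \ T0, gsE K Ω f τ := by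
    rw [setIntegral_sdiff hT0m (iTC _ cE) hsub]; ring
  have hlim : FF K ρ * vol T0 ≤ vol K * per Ω + C * vol Ω + ∫ τ in T0, gsE K Ω f τ := by
    have hv0 : 0 ≤ vol T0 := ENNReal.toReal_nonneg
    refine le_of_forall_pos_le_add fun ε hε => ?_
    have := hδ (ε / (vol T0 + 1)) (by positivity)
    have h2 : ε / (vol T0 + 1) * vol T0 ≤ ε := by
      rw [div_mul_eq_mul_div, div_le_iff₀ (by positivity)]
      nlinarith
    linarith
  rw [gs_ldEnergy hf]
  linarith

/-- Clamping to `[-1/2, 1/2]`. -/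
def gsClamp (a : ℝ) : ℝ := max (-(1/2)) (min a (1/2))

lemma gsClamp_abs (a : ℝ) : |gsClamp a| ≤ 1/2 := by
  unfold gsClamp
  rw [abs_le]
  exact ⟨le_max_left _ _, max_le (by norm_num) (min_le_right _ _)⟩

lemma gsClamp_eq {a : ℝ} (h : |a| ≤ 1/2) : gsClamp a = a := by
  unfold gsClamp
  rw [abs_le] at h
  rw [min_eq_left h.2, max_eq_right h.1]

lemma gsClamp_lip (a b : ℝ) : |gsClamp a - gsClamp b| ≤ |a - b| := by
  unfold gsClamp
  rw [max_comm, max_comm (-(1/2))]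
  refine (abs_max_sub_max_le_abs _ _ _).trans ?_
  exact (abs_min_sub_min_le_max _ _ _ _).trans (by simp)

lemma gsClamp_sq (a b : ℝ) : |gsClamp a ^ 2 - gsClamp b ^ 2| ≤ |a - b| := by
  have h : gsClamp a ^ 2 - gsClamp b ^ 2 = (gsClamp a + gsClamp b) * (gsClamp a - gsClamp b) := by ring
  rw [h, abs_mul]
  have h1 : |gsClamp a + gsClamp b| ≤ 1 :=
    (abs_add_le _ _).trans (by linarith [gsClamp_abs a, gsClamp_abs b])
  calc _ ≤ 1 * |gsClamp a - gsClamp b| := by gcongr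
    _ ≤ _ := by rw [one_mul]; exact gsClamp_lip a b

lemma gs_sqrt_lip {u v : ℝ} (hu : 1/4 ≤ u) (hv : 1/4 ≤ v) : |√u - √v| ≤ |u - v| := by
  have h1 : (1/2:ℝ) ≤ √u := Real.le_sqrt_of_sq_le (by linarith)
  have h2 : (1/2:ℝ) ≤ √v := Real.le_sqrt_of_sq_le (by linarith)
  have h3 : u - v = (√u + √v) * (√u - √v) := by
    have a := Real.mul_self_sqrt (show 0 ≤ u by linarith)
    have b := Real.mul_self_sqrt (show 0 ≤ v by linarith)
    linarith
  rw [h3, abs_mul]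
  refine le_mul_of_one_le_left (abs_nonneg _) ?_
  rw [abs_of_nonneg (by linarith)]; linarith

lemma gs_lipdom {R : ℝ} (hR : 1 ≤ R) : IsLipschitzDomain (1/2) 2 (ball (0:E3) R) := by
  intro x hx
  rw [frontier_ball (0:E3) (by linarith : R ≠ 0), mem_sphere_zero_iff_norm] at hx
  obtain ⟨A, hA⟩ := gs_rot x (EuclideanSpace.single 2 (-R)) (by
    simp [hx, abs_of_nonneg (by linarith : (0:ℝ) ≤ R)])
  refine ⟨A.toIsometryEquiv, fun q => -√(R^2 - gsClamp q.1 ^ 2 - gsClamp q.2 ^ 2), ?_, ?_⟩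
  · have hlow : ∀ a b, 1/4 ≤ R^2 - gsClamp a ^ 2 - gsClamp b ^ 2 := fun a b => by
      have h1 := sq_le_sq' (abs_le.1 (gsClamp_abs a)).1 (abs_le.1 (gsClamp_abs a)).2
      have h2 := sq_le_sq' (abs_le.1 (gsClamp_abs b)).1 (abs_le.1 (gsClamp_abs b)).2
      nlinarith
    refine LipschitzWith.of_dist_le_mul fun q q' => ?_
    rw [Real.coe_toNNReal _ (by norm_num), Real.dist_eq, neg_sub_neg]
    refine (gs_sqrt_lip (hlow _ _) (hlow _ _)).trans ?_
    have h1 : |q.1 - q'.1| ≤ dist q q' := by rw [← Real.dist_eq]; exact le_max_left _ _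
    have h2 : |q.2 - q'.2| ≤ dist q q' := by rw [← Real.dist_eq]; exact le_max_right _ _
    have h3 := gsClamp_sq q.1 q'.1
    have h4 := gsClamp_sq q.2 q'.2
    have h5 : R^2 - gsClamp q'.1 ^ 2 - gsClamp q'.2 ^ 2 - (R^2 - gsClamp q.1 ^ 2 - gsClamp q.2 ^ 2) =
      (gsClamp q.1 ^ 2 - gsClamp q'.1 ^ 2) + (gsClamp q.2 ^ 2 - gsClamp q'.2 ^ 2) := by ring
    rw [h5]
    refine (abs_add_le _ _).trans ?_
    linarith
  · ext y
    have key : y ∈ ball x (1/2) → (y ∈ ball (0:E3) R ↔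
        -√(R^2 - gsClamp (A y 0) ^ 2 - gsClamp (A y 1) ^ 2) < A y 2) := by
      intro hy
      have hn : ‖A y - EuclideanSpace.single 2 (-R)‖ < 1/2 := by
        rw [← hA, ← map_sub, A.norm_map, ← dist_eq_norm]; exact hy
      have hc : ∀ i, |(A y - EuclideanSpace.single 2 (-R) : E3) i| < 1/2 := fun i =>
        lt_of_le_of_lt (PiLp.norm_apply_le (A y - EuclideanSpace.single 2 (-R)) i) hn
      have c0 : |A y 0| < 1/2 := by simpa using hc 0
      have c1 : |A y 1| < 1/2 := by simpa using hc 1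
      have c2 : |A y 2 + R| < 1/2 := by simpa using hc 2
      rw [gsClamp_eq c0.le, gsClamp_eq c1.le, mem_ball_zero_iff, ← A.norm_map y,
        EuclideanSpace.norm_eq, Fin.sum_univ_three]
      simp only [Real.norm_eq_abs, sq_abs]
      set a := A y 0
      set b := A y 1
      set c := A y 2
      have hcn : c < 0 := by have := (abs_lt.1 c2).2; linarith
      rw [Real.sqrt_lt' (by linarith), neg_lt, Real.lt_sqrt (by linarith)]
      constructor <;> intro h <;> nlinarith
    constructor
    · rintro ⟨h1, h2⟩
      exact ⟨h2, (key h2).1 h1⟩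
    · rintro ⟨h2, h1⟩
      exact ⟨(key h2).2 h1, h2⟩

lemma gs_fisher {R : ℝ} (hR : 0 < R) : FisherCond 43 R (ball (0:E3) R) := by
  intro h h0 hh
  rw [frontier_ball (0:E3) hR.ne']
  have hsub : sphere (0:E3) R + ball (0:E3) h ⊆ ball (0:E3) (R + h) \ ball (0:E3) (R - h) := by
    rintro _ ⟨s, hs, b, hb, rfl⟩
    rw [mem_sphere_zero_iff_norm] at hs
    rw [mem_ball_zero_iff] at hb
    beta_reduce
    rw [Set.mem_sdiff, mem_ball_zero_iff, mem_ball_zero_iff]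
    have a1 := norm_add_le s b
    have a2 : ‖s + b - b‖ ≤ ‖s + b‖ + ‖b‖ := norm_sub_le _ _
    rw [add_sub_cancel_right] at a2
    constructor
    · linarith
    · linarith
  have hb : volume (ball (0:E3) (R + h)) ≠ ⊤ := measure_ball_lt_top.ne
  calc (volume (sphere (0:E3) R + ball (0:E3) h)).toReal
      ≤ (volume (ball (0:E3) (R + h) \ ball (0:E3) (R - h))).toReal :=
        ENNReal.toReal_mono ((measure_mono sdiff_subset).trans_lt hb.lt_top |>.ne) (measure_mono hsub)
    _ = vol (ball (0:E3) (R + h)) - vol (ball (0:E3) (R - h)) :=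
        measureReal_sdiff (ball_subset_ball (by linarith)) measurableSet_ball hb
    _ = (6 * R^2 * h + 2 * h^3) * (Real.pi * 4 / 3) := by
        rw [gs_vol_ball (by linarith), gs_vol_ball (by linarith)]; ring
    _ ≤ (8 * R^2 * h) * (4 * 4 / 3) := by
        have : h^3 ≤ R^2 * h := by
          have : h^2 ≤ R^2 := by gcongr
          nlinarith
        have := Real.pi_le_four
        gcongr
        linarith
    _ ≤ 43 * R^2 * h := by
        have : 0 ≤ R^2 * h := by positivity
        nlinarith

lemma gs_admissible : IsAdmissibleSeq (1/2) 2 43 (fun n : ℕ => ball (0:E3) (n + 1)) (fun n => (n:ℝ) + 1) := by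
  refine ⟨tendsto_atTop_add_const_right _ _ tendsto_natCast_atTop_atTop, fun n => ?_⟩
  have hn : (0:ℝ) ≤ n := Nat.cast_nonneg n
  refine ⟨isOpen_ball, isBounded_ball, gs_lipdom (by linarith), ball_subset_ball ?_, Subset.rfl,
    gs_fisher (by linarith)⟩
  beta_reduce
  rw [div_le_iff₀ (by norm_num)]
  linarith

lemma gs_EE_nonempty {R ρ : ℝ} (hR : 0 < R) (h0 : 0 ≤ ρ) (h1 : ρ ≤ 1) :
    {t : ℝ | ∃ Ω : Set E3, MeasurableSet Ω ∧ Ω ⊆ ball 0 R ∧ HasFinPer Ω ∧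
      vol Ω = ρ * vol (ball (0:E3) R) ∧ t = ldEnergy (ball 0 R) ρ Ω}.Nonempty := by
  rcases h0.eq_or_lt with rfl | hρ
  · exact ⟨_, ∅, MeasurableSet.empty, empty_subset _, gs_finPer_empty, by simp [vol], rfl⟩
  · set c := ρ ^ ((1:ℝ)/3) with hc
    have hc0 : 0 < c := Real.rpow_pos_of_pos hρ _
    have hc1 : c ≤ 1 := Real.rpow_le_one h0 h1 (by norm_num)
    have hc3 : c^3 = ρ := by
      rw [hc, ← Real.rpow_natCast, ← Real.rpow_mul h0]; norm_num
    obtain ⟨C, hC⟩ := gs_cut_ball (s := c * R) (by positivity)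
    refine ⟨_, ball 0 (c * R), measurableSet_ball, ball_subset_ball (by nlinarith),
      hC.finPer measurableSet_ball, ?_, rfl⟩
    rw [gs_vol_ball (by positivity), gs_vol_ball hR.le, mul_pow, hc3]; ring

lemma gs_finite_vol {K : Set E3} {p : E3 → ℝ} (hK : GsTet K p) {C : ℝ} (hC : GsCut K C)
    (hKp : 0 < vol K) {d R ρ : ℝ} (hKd : K ⊆ ball 0 d) (hd : 0 < d) (hdR : d ≤ R) (h0 : 0 ≤ ρ)
    (h1 : ρ ≤ 1) :
    (FF K ρ * ((R - d) / R)^3 - (1/2 * gsJmax d + |muStar| * vol K) *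
      (((R + d) / R)^3 - ((R - d) / R)^3) - C * ρ) / vol K + muStar * ρ ≤
      EE (ball 0 R) ρ / vol (ball (0:E3) R) := by
  have hR : 0 < R := by linarith
  have hpi := Real.pi_pos
  have hV : vol (ball (0:E3) R) = R^3 * (Real.pi * 4 / 3) := gs_vol_ball hR.le
  have hV0 : 0 < vol (ball (0:E3) R) := by rw [hV]; positivity
  rw [le_div_iff₀ hV0]
  refine le_csInf (gs_EE_nonempty hR h0 h1) ?_
  rintro _ ⟨Ω, hm, hs, hp, hv, rfl⟩
  obtain ⟨Ω', hm', hs', hp', hv', hE', hk⟩ := gs_wlog h0 h1 hm hs hp hK.pc hK.p0 hK.ph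
  have hmain := gs_main hK hC hKp hKd hd h0 h1 hm' hs' hp' hk
  rw [hE', hv', hv, gs_vol_cball (by linarith), gs_vol_cball (by linarith)] at hmain
  set F := FF K ρ
  set c := 1/2 * gsJmax d + |muStar| * vol K
  set E := ldEnergy (ball 0 R) ρ Ω
  set V := vol (ball (0:E3) R)
  have e1 : (R - d)^3 * (Real.pi * 4 / 3) = ((R - d)/R)^3 * V := by rw [hV]; field_simp
  have e2 : (R + d)^3 * (Real.pi * 4 / 3) = ((R + d)/R)^3 * V := by rw [hV]; field_simp
  rw [e1, e2] at hmain
  set a := ((R - d)/R)^3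
  set b := ((R + d)/R)^3
  have : ((F * a - c * (b - a) - C * ρ) / vol K + muStar * ρ) * V =
      (F * (a * V) - c * (b * V - a * V) - C * (ρ * V)) / vol K + muStar * (ρ * V) := by
    field_simp
  rw [this, ← le_sub_iff_add_le, div_le_iff₀ hKp]
  linarith

lemma gs_limit {K : Set E3} {p : E3 → ℝ} (hK : GsTet K p) {C : ℝ} (hC : GsCut K C)
    (hKp : 0 < vol K) {ρ : ℝ} (h0 : 0 ≤ ρ) (h1 : ρ ≤ 1) {e : ℝ → ℝ} (he : IsThermoLimit e) :
    (FF K ρ - C * ρ) / vol K + muStar * ρ ≤ e ρ := by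
  obtain ⟨d, hd, hKd⟩ := hK.bdd.subset_ball_lt 0 0
  have hlim := he ρ h0 h1 (1/2) 2 43 _ _ (by norm_num) (by norm_num) (by norm_num) gs_admissible
  have hinf : Tendsto (fun n : ℕ => (n:ℝ) + 1) atTop atTop :=
    tendsto_atTop_add_const_right _ _ tendsto_natCast_atTop_atTop
  have hz : Tendsto (fun n : ℕ => d / ((n:ℝ) + 1)) atTop (𝓝 0) := hinf.const_div_atTop d
  have hm : Tendsto (fun n : ℕ => (((n:ℝ) + 1 - d) / ((n:ℝ) + 1))^3) atTop (𝓝 1) := by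
    have := (hz.const_sub 1).pow 3
    norm_num at this
    refine this.congr fun n => ?_
    have : (n:ℝ) + 1 ≠ 0 := by positivity
    field_simp
  have hp : Tendsto (fun n : ℕ => (((n:ℝ) + 1 + d) / ((n:ℝ) + 1))^3) atTop (𝓝 1) := by
    have := (hz.const_add 1).pow 3
    norm_num at this
    refine this.congr fun n => ?_
    have : (n:ℝ) + 1 ≠ 0 := by positivity
    field_simp
  have hl : Tendsto (fun n : ℕ => (FF K ρ * (((n:ℝ) + 1 - d) / ((n:ℝ) + 1))^3 -
      (1/2 * gsJmax d + |muStar| * vol K) * ((((n:ℝ) + 1 + d) / ((n:ℝ) + 1))^3 -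
        (((n:ℝ) + 1 - d) / ((n:ℝ) + 1))^3) - C * ρ) / vol K + muStar * ρ) atTop
      (𝓝 ((FF K ρ * 1 - (1/2 * gsJmax d + |muStar| * vol K) * (1 - 1) - C * ρ) / vol K + muStar * ρ)) :=
    (((((hm.const_mul _).sub ((hp.sub hm).const_mul _)).sub_const _).div_const _).add_const _)
  rw [sub_self, mul_zero, sub_zero, mul_one] at hl
  refine le_of_tendsto_of_tendsto hl hlim ?_
  filter_upwards [hinf.eventually_ge_atTop d] with n hn
  exact gs_finite_vol hK hC hKp hKd hd hn h0 h1

/-- **Reduction to sets of finite size via the Graf–Schenker inequality**: for a tetrahedron `Δ`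
of unit volume there is a constant `C` depending only on `Δ` such that
`e(ρ) − μ*ρ ≥ F_{ℓΔ}(ρ)/ℓ³ − Cρ/ℓ` for all `ρ ∈ [0,1]` and `ℓ > 0`. -/
theorem graf_schenker_reduction (Δ : Set E3) (hΔ : IsTetra Δ) (hΔvol : volume Δ = 1)
    (e : ℝ → ℝ) (he : IsThermoLimit e) :
    ∃ C : ℝ, 0 < C ∧ ∀ ρ : ℝ, 0 ≤ ρ → ρ ≤ 1 → ∀ ℓ : ℝ, 0 < ℓ →
      FF (ℓ • Δ) ρ / ℓ^3 - C * ρ / ℓ ≤ e ρ - muStar * ρ := by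
  obtain ⟨p, C, hT, hC⟩ := gs_tet hΔ
  refine ⟨max C 1, by positivity, fun ρ h0 h1 ℓ hl => ?_⟩
  have hv : vol (ℓ • Δ) = ℓ^3 := by
    rw [gs_vol_smul hl]; simp [vol, hΔvol]
  have h := gs_limit (hT.scale hl) (hC.scale hl) (by rw [hv]; positivity) h0 h1 he
  rw [hv] at h
  have e1 : (FF (ℓ • Δ) ρ - ℓ^2 * C * ρ) / ℓ^3 = FF (ℓ • Δ) ρ / ℓ^3 - C * ρ / ℓ := by
    field_simp
  rw [e1] at h
  have e2 : C * ρ / ℓ ≤ max C 1 * ρ / ℓ := by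
    gcongr
    exact le_max_left _ _
  linarith

end
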